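/- arXiv:2512.09176 — 2 statements merged into one kernel-verified Lean document; each statement's English description precedes it below -/
import Mathlib

section
/- If G is a paw-free graph that contains no induced subgraph isomorphic to the E-graph, then χ(G) ≤ ω(G) + 1. (Contrapositive formulation: if G is paw-free and χ(G) > ω(G) + 1, then G contains an induced E-graph.) -/
/-!
Colour each connected component separately; components inherit both forbidden subgraphs.

A component with a triangle is complete multipartite by Olariu's theorem (`multipartite`): in a
connected paw-free graph every vertex sees at least two vertices of each triangle. Such a component
can be coloured with as many colours as its clique number.

A component without triangles is 3-colourable (`colorable_three`), which is enough because an edge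
already gives clique number at least two. Unless the component is bipartite, take a shortest odd
cycle. In a triangle-free graph an E-graph is just a claw with two extended legs, subject to five
non-adjacencies (`EFree`), and a cycle vertex is a natural centre for such claws.

If the cycle has length at least seven, each neighbour of the cycle is a clone of a cycle vertex,
i.e. sees the two cycle neighbours of that vertex (`OddHole.clone`). Since a cycle vertex may be
exchanged for any of its clones, connectedness makes every vertex a clone (`OddHole.all_clone`),
and the component maps homomorphically to the odd cycle (`OddHole.colorable`).

If the cycle has length five, every vertex with a neighbour on it lies in a set `A i` (it sees both
cycle neighbours of `f i`) or in a set `B i` (it sees only `f i`). The neighbourhood of any remaining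
vertex is contained in that of some cycle vertex (`far_dom`), so that vertex can copy a colour. Edges
among the sets `A i`, `B i` are restricted by `edge_aa`, `edge_ab` and `edge_bb`, and constant colours
on these ten sets fail only for edges between `A 2` and `B 4` and between `B 0` and `A 3`. Giving the
third colour to the vertices of `A 2` and `B 0` that lie on such edges repairs this: a clash would
consist of an edge from `A 2` to `B 0` whose end in `A 2` has a neighbour in `B 4`, which is
impossible because `B 4` is complete to `B 0` (`rungs`, `no_both`).
-/

/-- The paw: a triangle `0,1,2` together with a pendant vertex `3` attached to `0`. -/
def pawGraph : SimpleGraph (Fin 4) :=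
  SimpleGraph.fromEdgeSet {s(0, 1), s(1, 2), s(0, 2), s(0, 3)}

/-- The E-graph: the path `0-1-2` with a leaf attached to each of its vertices. -/
def eGraph : SimpleGraph (Fin 6) :=
  SimpleGraph.fromEdgeSet {s(0, 1), s(1, 2), s(0, 3), s(1, 4), s(2, 5)}

open SimpleGraph

namespace PawE

/-! ### Forbidden subgraphs and Olariu's theorem -/

variable {V : Type*} {G : SimpleGraph V}

/-- `G` has no triangle, spelled out on vertices. -/
def TriFree (G : SimpleGraph V) : Prop := ∀ a b c, G.Adj a b → G.Adj b c → ¬ G.Adj a c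

/-- A map on `Fin n` that preserves and reflects adjacency is automatically injective when the source
has no two vertices with the same neighbourhood; this is how both forbidden subgraphs are produced. -/
theorem embeds {n : ℕ} {H : SimpleGraph (Fin n)} (φ : Fin n → V)
    (twin : ∀ a b, (∀ c, H.Adj a c ↔ H.Adj b c) → a = b)
    (h : ∀ a b, G.Adj (φ a) (φ b) ↔ H.Adj a b) : Nonempty (H ↪g G) :=
  ⟨⟨⟨φ, fun a b hab => twin a b fun c => by rw [← h, ← h, hab]⟩, fun {a b} => h a b⟩⟩

theorem paw_elem (hpaw : ¬ Nonempty (pawGraph ↪g G)) {a b c d : V} (hab : G.Adj a b)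
    (hbc : G.Adj b c) (hac : G.Adj a c) (hd : G.Adj d a) : G.Adj d b ∨ G.Adj d c := by
  by_contra! hcon
  obtain ⟨h1, h2⟩ := hcon
  refine hpaw (embeds ![a, b, c, d] ?_ ?_)
  · simp only [pawGraph, fromEdgeSet_adj]; decide
  · intro x y
    fin_cases x <;> fin_cases y <;> simp [pawGraph, hab, hbc, hac, hd, h1, h2, hab.symm, hbc.symm,
      hac.symm, hd.symm, G.adj_comm b d, G.adj_comm c d]

/-- In a triangle-free graph, a claw with centre `c`, leaf `l` and two legs `p`, `q` extended to `p'`,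
`q'` is an induced E-graph unless one of five further edges is present. -/
def EFree (G : SimpleGraph V) : Prop := ∀ c l p p' q q', G.Adj c l → G.Adj c p → G.Adj p p' →
  G.Adj c q → G.Adj q q' →
  G.Adj l p' ∨ G.Adj l q' ∨ G.Adj p q' ∨ G.Adj q p' ∨ G.Adj p' q'

theorem eFree_of (ht : TriFree G) (hE : ¬ Nonempty (eGraph ↪g G)) : EFree G := by
  intro c l p p' q q' h1 h2 h3 h4 h5
  by_contra! hcon
  obtain ⟨k1, k2, k3, k4, k5⟩ := hcon
  have m1 : ¬ G.Adj l p := ht _ _ _ h1.symm h2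
  have m2 : ¬ G.Adj l q := ht _ _ _ h1.symm h4
  have m3 : ¬ G.Adj p q := ht _ _ _ h2.symm h4
  have m4 : ¬ G.Adj c p' := ht _ _ _ h2 h3
  have m5 : ¬ G.Adj c q' := ht _ _ _ h4 h5
  refine hE (embeds ![p, c, q, p', l, q'] ?_ ?_)
  · simp only [eGraph, fromEdgeSet_adj]; decide
  · intro x y
    have s1 := fun a b => G.adj_comm a b
    fin_cases x <;> fin_cases y <;> simp [eGraph] <;> grind [G.adj_comm]

/-- In a connected graph, a nonempty set of vertices closed under adjacency is everything. -/
theorem closed_univ (hc : G.Preconnected) (P : V → Prop) {v : V} (hv : P v)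
    (h : ∀ x y, P x → G.Adj x y → P y) (w : V) : P w := by
  obtain ⟨p⟩ := hc v w
  induction p with
  | nil => exact hv
  | cons hadj _ ih => exact ih (h _ _ hv hadj)

/-- Every vertex of a connected paw-free graph with a triangle sees at least two
vertices of that triangle. -/
theorem two_of_triangle (hc : G.Preconnected) (hpaw : ¬ Nonempty (pawGraph ↪g G)) {a b c : V}
    (hab : G.Adj a b) (hbc : G.Adj b c) (hac : G.Adj a c) (v : V) :
    (G.Adj v a ∧ G.Adj v b) ∨ (G.Adj v b ∧ G.Adj v c) ∨ (G.Adj v a ∧ G.Adj v c) := by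
  -- One neighbour in a triangle forces a second one.
  have key : ∀ x, G.Adj x a ∨ G.Adj x b ∨ G.Adj x c →
      (G.Adj x a ∧ G.Adj x b) ∨ (G.Adj x b ∧ G.Adj x c) ∨ (G.Adj x a ∧ G.Adj x c) := by
    intro x hx
    have h1 := @paw_elem _ _ hpaw a b c x hab hbc hac
    have h2 := @paw_elem _ _ hpaw b a c x hab.symm hac hbc
    have h3 := @paw_elem _ _ hpaw c a b x hac.symm hab hbc.symm
    tauto
  refine closed_univ hc (fun v => (G.Adj v a ∧ G.Adj v b) ∨ (G.Adj v b ∧ G.Adj v c) ∨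
    (G.Adj v a ∧ G.Adj v c)) (v := a) (key a (by tauto)) ?_ v
  intro x y hx hxy
  apply key
  rcases hx with ⟨h1, h2⟩ | ⟨h1, h2⟩ | ⟨h1, h2⟩
  · have := paw_elem hpaw h1 hab h2 hxy.symm; tauto
  · have := paw_elem hpaw h1 hbc h2 hxy.symm; tauto
  · have := paw_elem hpaw h1 hac h2 hxy.symm; tauto

/-- Olariu's theorem, in the form needed here. -/
theorem multipartite (hc : G.Preconnected) (hpaw : ¬ Nonempty (pawGraph ↪g G))
    (ht : ¬ TriFree G) : G.IsCompleteMultipartite := by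
  simp only [TriFree, not_forall, not_not] at ht
  obtain ⟨a, b, c, hab, hbc, hac⟩ := ht
  refine ⟨fun x y z hxy hyz hxz => ?_⟩
  -- The edge `xz` lies in a triangle `xzt`, of which `y` sees at most the vertex `t`.
  have tri : ∃ t, G.Adj x t ∧ G.Adj z t := by
    have hx := two_of_triangle hc hpaw hab hbc hac x
    have hz := two_of_triangle hc hpaw hab hbc hac z
    by_contra! h
    have := h a; have := h b; have := h c
    tauto
  obtain ⟨t, hxt, hzt⟩ := tri
  have := two_of_triangle hc hpaw hxz hzt hxt y
  have := G.adj_comm x y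
  tauto

/-! ### Dominating 5-cycles -/

/-- `a₀ a₁ a₂ a₃ a₄` is a 5-cycle. -/
def C5 (G : SimpleGraph V) (a0 a1 a2 a3 a4 : V) : Prop :=
  G.Adj a0 a1 ∧ G.Adj a1 a2 ∧ G.Adj a2 a3 ∧ G.Adj a3 a4 ∧ G.Adj a4 a0

/-- If `x` sees only `a₀` on a 5-cycle, each neighbour of `x` sees `a₁` or `a₄`. -/
theorem leg (ht : TriFree G) (hE : EFree G) {a0 a1 a2 a3 a4 x y : V} (h : C5 G a0 a1 a2 a3 a4)
    (hx : G.Adj x a0) (h2 : ¬ G.Adj x a2) (h3 : ¬ G.Adj x a3) (hxy : G.Adj x y) :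
    G.Adj y a1 ∨ G.Adj y a4 := by
  obtain ⟨e0, e1, e2, e3, e4⟩ := h
  by_contra! hcon
  obtain ⟨n1, n4⟩ := hcon
  have t1 := hE a0 a4 x y a1 a2 e4.symm hx.symm hxy e0 e1
  have t2 := hE a0 a1 x y a4 a3 e0 hx.symm hxy e4.symm e3.symm
  have t3 := ht y a2 a3
  have t4 := ht a0 x a1
  have t5 := ht a0 x a4
  have t6 := ht a2 a3 a4
  have t7 := ht a1 a2 a3
  have t8 := ht x a0 a1
  have t9 := ht x a0 a4
  grind [G.adj_comm]

/-- Vertices seeing exactly `a₀`, respectively exactly `a₁`, on a 5-cycle are adjacent. -/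
theorem rungs (ht : TriFree G) (hE : EFree G) {a0 a1 a2 a3 a4 x y : V} (h : C5 G a0 a1 a2 a3 a4)
    (hx : G.Adj x a0) (h3 : ¬ G.Adj x a3)
    (hy : G.Adj y a1) (h3' : ¬ G.Adj y a3) (h4' : ¬ G.Adj y a4) : G.Adj x y := by
  obtain ⟨e0, e1, e2, e3, e4⟩ := h
  by_contra hcon
  have t1 := hE a0 x a1 y a4 a3 hx.symm e0 hy.symm e4.symm e3.symm
  have t6 := ht a1 a2 a3
  grind [G.adj_comm]

section Five

variable {f : Fin 5 → V}

/-- `x` sees both cycle neighbours of `f i`; in particular `f i` itself does. -/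
def A (G : SimpleGraph V) (f : Fin 5 → V) (i : Fin 5) (x : V) : Prop :=
  G.Adj x (f (i + 1)) ∧ G.Adj x (f (i + 4))

/-- `f i` is the only neighbour of `x` on the cycle (in a triangle-free graph). -/
def B (G : SimpleGraph V) (f : Fin 5 → V) (i : Fin 5) (x : V) : Prop :=
  G.Adj x (f i) ∧ ¬ G.Adj x (f (i + 2)) ∧ ¬ G.Adj x (f (i + 3))

theorem c5_at (hf : ∀ i, G.Adj (f i) (f (i + 1))) (i : Fin 5) :
    C5 G (f i) (f (i + 1)) (f (i + 2)) (f (i + 3)) (f (i + 4)) := by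
  have h0 := hf 0
  have h1 := hf 1
  have h2 := hf 2
  have h3 := hf 3
  have h4 := hf 4
  fin_cases i <;> simp_all [C5]

/-- The sets `A j`, `B j` cover the neighbourhood of the cycle. -/
theorem a_or_b {x : V} {i : Fin 5} (hx : G.Adj x (f i)) : ∃ j, A G f j x ∨ B G f j x := by
  by_cases h2 : G.Adj x (f (i + 2))
  · refine ⟨i + 1, Or.inl ⟨?_, ?_⟩⟩
    · rwa [show i + 1 + 1 = i + 2 by omega]
    · rwa [show i + 1 + 4 = i by omega]
  by_cases h3 : G.Adj x (f (i + 3))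
  · refine ⟨i + 4, Or.inl ⟨?_, ?_⟩⟩
    · rwa [show i + 4 + 1 = i by omega]
    · rwa [show i + 4 + 4 = i + 3 by omega]
  exact ⟨i, Or.inr ⟨hx, h2, h3⟩⟩

theorem edge_aa (ht : TriFree G) {x y : V} {i j : Fin 5} (hx : A G f i x)
    (hy : A G f j y) (hxy : G.Adj x y) : j = i + 1 ∨ j = i + 4 := by
  have t := fun k (h : G.Adj x (f k)) (h' : G.Adj y (f k)) => ht x y (f k) hxy h' h
  obtain ⟨x1, x2⟩ := hx
  obtain ⟨y1, y2⟩ := hy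
  fin_cases i <;> fin_cases j <;> simp at * <;> grind

theorem edge_ab (ht : TriFree G) {x y : V} {i j : Fin 5} (hx : A G f i x)
    (hy : B G f j y) (hxy : G.Adj x y) : j = i ∨ j = i + 2 ∨ j = i + 3 := by
  have t := fun k (h : G.Adj x (f k)) (h' : G.Adj y (f k)) => ht x y (f k) hxy h' h
  obtain ⟨x1, x2⟩ := hx
  obtain ⟨y1, y2⟩ := hy
  fin_cases i <;> fin_cases j <;> simp at * <;> grind

theorem edge_bb (ht : TriFree G) (hE : EFree G) (hf : ∀ i, G.Adj (f i) (f (i + 1)))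
    {x y : V} {i j : Fin 5} (hx : B G f i x)
    (hy : B G f j y) (hxy : G.Adj x y) : j = i + 1 ∨ j = i + 4 := by
  have t := fun k (h : G.Adj x (f k)) (h' : G.Adj y (f k)) => ht x y (f k) hxy h' h
  obtain ⟨x1, x2, x3⟩ := hx
  have l := leg ht hE (c5_at hf i) x1 x2 x3 hxy
  have u := fun k h => ht y (f k) (f (k + 1)) h (hf k)
  have u0 := u 0
  have u1 := u 1
  have u2 := u 2
  have u3 := u 3
  have u4 := u 4
  clear u
  obtain ⟨y1, y2, y3⟩ := hy
  fin_cases i <;> fin_cases j <;> simp at * <;> grind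

/-- `x` has a neighbour on the cycle. -/
def Near (G : SimpleGraph V) (f : Fin 5 → V) (x : V) : Prop := ∃ i, G.Adj x (f i)

/-- A vertex off the cycle's neighbourhood can only be adjacent to vertices of the sets `A i`. -/
theorem a_of_far (ht : TriFree G) (hE : EFree G) (hf : ∀ i, G.Adj (f i) (f (i + 1)))
    {x y : V} (hx : Near G f x) (hy : ¬ Near G f y) (hxy : G.Adj x y) : ∃ i, A G f i x := by
  obtain ⟨i, hi⟩ := hx
  obtain ⟨j, hj | ⟨h1, h2, h3⟩⟩ := a_or_b hi
  · exact ⟨j, hj⟩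
  · rcases leg ht hE (c5_at hf j) h1 h2 h3 hxy with h | h
    · exact absurd ⟨_, h⟩ hy
    · exact absurd ⟨_, h⟩ hy

/-- Replacing `f i` by `x ∈ A i` gives a 5-cycle on which `y` sees only `x`. -/
theorem far_step (ht : TriFree G) (hE : EFree G) (hf : ∀ i, G.Adj (f i) (f (i + 1)))
    {x y z : V} {i : Fin 5} (hx : A G f i x) (hy : ¬ Near G f y) (hxy : G.Adj x y)
    (hyz : G.Adj y z) : G.Adj z (f (i + 1)) ∨ G.Adj z (f (i + 4)) := by
  obtain ⟨-, e1, e2, e3, -⟩ := c5_at hf i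
  exact leg ht hE (a0 := x) ⟨hx.1, e1, e2, e3, hx.2.symm⟩ hxy.symm
    (fun h => hy ⟨_, h⟩) (fun h => hy ⟨_, h⟩) hyz

/-- A vertex with no neighbour on the cycle is dominated by a cycle vertex. -/
theorem far_dom (ht : TriFree G) (hE : EFree G) (hf : ∀ i, G.Adj (f i) (f (i + 1)))
    {x y : V} (hx : Near G f x) (hy : ¬ Near G f y) (hxy : G.Adj x y) :
    ∃ k, ∀ z, G.Adj y z → G.Adj z (f k) := by
  obtain ⟨i, hi⟩ := a_of_far ht hE hf hx hy hxy
  have st := fun z (hz : G.Adj y z) => far_step ht hE hf hi hy hxy hz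
  -- The neighbours of `y` lie in `A i`, `A (i + 2)` or `A (i + 3)`.
  have cl : ∀ z, G.Adj y z → A G f i z ∨ A G f (i + 2) z ∨ A G f (i + 3) z := by
    intro z hz
    have s := st z hz
    have hn : Near G f z := by rcases s with h | h <;> exact ⟨_, h⟩
    obtain ⟨j, hj1, hj2⟩ := a_of_far ht hE hf hn hy hz.symm
    have t := fun k => ht z (f k) (f (k + 1))
    have t' := fun k h => t k h (hf k)
    clear st hi t
    have t0 := t' 0
    have t1 := t' 1
    have t2 := t' 2
    have t3 := t' 3
    have t4 := t' 4
    clear t'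
    unfold A
    fin_cases i <;> fin_cases j <;> simp at * <;> grind
  by_cases hex : ∃ z, G.Adj y z ∧ A G f (i + 2) z
  · -- Then `A (i + 3)` is excluded as well.
    obtain ⟨z, hyz, hz⟩ := hex
    refine ⟨i + 1, fun w hw => ?_⟩
    have s := far_step ht hE hf hz hy hyz.symm hw
    rw [show i + 2 + 4 = i + 1 by omega, show i + 2 + 1 = i + 3 by omega] at s
    rcases s with s | s
    · rcases cl w hw with h | h | h
      · exact h.1
      · have := h.2; rwa [show i + 2 + 4 = i + 1 by omega] at this
      · have := h.2
        rw [show i + 3 + 4 = i + 2 by omega] at this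
        exact absurd s (ht _ _ _ this (c5_at hf i).2.2.1)
    · exact s
  · refine ⟨i + 4, fun w hw => ?_⟩
    rcases cl w hw with h | h | h
    · exact h.2
    · exact absurd ⟨w, hw, h⟩ hex
    · have := h.1; rwa [show i + 3 + 1 = i + 4 by omega] at this

theorem far_near (ht : TriFree G) (hE : EFree G) (hf : ∀ i, G.Adj (f i) (f (i + 1)))
    {x y z : V} (hx : Near G f x) (hy : ¬ Near G f y) (hxy : G.Adj x y) (hyz : G.Adj y z) :
    Near G f z := by
  obtain ⟨k, hk⟩ := far_dom ht hE hf hx hy hxy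
  exact ⟨k, hk z hyz⟩

/-- Colours of the sets `A i`. -/
def colA : Fin 5 → Fin 3 := ![0, 1, 0, 1, 2]

/-- Colours of the sets `B i`. -/
def colB : Fin 5 → Fin 3 := ![1, 0, 1, 2, 0]

/-- `c` is an admissible colour of `x`. The basic colours of `A 2` and `B 4`, and those of `B 0` and
`A 3`, coincide, so the vertices of `A 2` with a neighbour in `B 4`, and those of `B 0` with a
neighbour in `A 3`, receive the colour `2` instead. -/
def Col (G : SimpleGraph V) (f : Fin 5 → V) (x : V) (c : Fin 3) : Prop :=
  ∃ i, (A G f i x ∧ ((i = 2 ∧ (∃ y, G.Adj x y ∧ B G f 4 y) ∧ c = 2) ∨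
        (¬ (i = 2 ∧ ∃ y, G.Adj x y ∧ B G f 4 y) ∧ c = colA i))) ∨
    (B G f i x ∧ ((i = 0 ∧ (∃ y, G.Adj x y ∧ A G f 3 y) ∧ c = 2) ∨
        (¬ (i = 0 ∧ ∃ y, G.Adj x y ∧ A G f 3 y) ∧ c = colB i)))

theorem col_exists {x : V} (hx : Near G f x) : ∃ c, Col G f x c := by
  obtain ⟨i, hi⟩ := hx
  obtain ⟨j, hj | hj⟩ := a_or_b hi
  · by_cases h : j = 2 ∧ ∃ y, G.Adj x y ∧ B G f 4 y
    · exact ⟨2, j, Or.inl ⟨hj, Or.inl ⟨h.1, h.2, rfl⟩⟩⟩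
    · exact ⟨_, j, Or.inl ⟨hj, Or.inr ⟨h, rfl⟩⟩⟩
  · by_cases h : j = 0 ∧ ∃ y, G.Adj x y ∧ A G f 3 y
    · exact ⟨2, j, Or.inr ⟨hj, Or.inl ⟨h.1, h.2, rfl⟩⟩⟩
    · exact ⟨_, j, Or.inr ⟨hj, Or.inr ⟨h, rfl⟩⟩⟩

/-- The two exceptional recolourings do not clash: a vertex of `B 0` adjacent to `x` would form a
triangle with `x` and the neighbour of `x` in `B 4`. -/
theorem no_both (ht : TriFree G) (hE : EFree G) (hf : ∀ i, G.Adj (f i) (f (i + 1)))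
    {x y z : V} (hxy : G.Adj x y) (hy : B G f 0 y) (hxz : G.Adj x z) (hz : B G f 4 z) : False := by
  have := rungs ht hE (c5_at hf 4) hz.1 hz.2.2 (y := y) hy.1 hy.2.1 hy.2.2
  exact ht _ _ _ hxz this hxy

theorem col_proper_aa (ht : TriFree G) {x y : V} {i j : Fin 5} {c d : Fin 3} (hx : A G f i x)
    (hy : A G f j y) (hxy : G.Adj x y)
    (hc : (i = 2 ∧ c = 2) ∨ c = colA i) (hd : (j = 2 ∧ d = 2) ∨ d = colA j) : c ≠ d := by
  rcases edge_aa ht hx hy hxy with rfl | rfl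
  · clear hx hy; revert i c d; decide
  · clear hx hy; revert i c d; decide

theorem col_proper_bb (ht : TriFree G) (hE : EFree G) (hf : ∀ i, G.Adj (f i) (f (i + 1)))
    {x y : V} {i j : Fin 5} {c d : Fin 3} (hx : B G f i x)
    (hy : B G f j y) (hxy : G.Adj x y)
    (hc : (i = 0 ∧ c = 2) ∨ c = colB i) (hd : (j = 0 ∧ d = 2) ∨ d = colB j) : c ≠ d := by
  rcases edge_bb ht hE hf hx hy hxy with rfl | rfl
  · clear hx hy; revert i c d; decide
  · clear hx hy; revert i c d; decide

/-- Edges between `A i` and `B j` are properly coloured. Here `p` records whether the endpoint in `A i`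
has a neighbour in `B 4`, and `q` whether the endpoint in `B j` has a neighbour in `A 3`. -/
theorem col_table : ∀ (p q : Bool) (i j : Fin 5), (j = i ∨ j = i + 2 ∨ j = i + 3) →
    (j = 4 → p = true) → (i = 3 → q = true) → (j = 0 → p = false) →
    (if i = 2 ∧ p = true then 2 else colA i) ≠ (if j = 0 ∧ q = true then 2 else colB j) := by
  decide

theorem col_proper_ab (ht : TriFree G) (hE : EFree G) (hf : ∀ i, G.Adj (f i) (f (i + 1)))
    {x y : V} {i j : Fin 5} {c d : Fin 3} (hx : A G f i x)
    (hy : B G f j y) (hxy : G.Adj x y)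
    (hc : (i = 2 ∧ (∃ y, G.Adj x y ∧ B G f 4 y) ∧ c = 2) ∨
        (¬ (i = 2 ∧ ∃ y, G.Adj x y ∧ B G f 4 y) ∧ c = colA i))
    (hd : (j = 0 ∧ (∃ x, G.Adj y x ∧ A G f 3 x) ∧ d = 2) ∨
        (¬ (j = 0 ∧ ∃ x, G.Adj y x ∧ A G f 3 x) ∧ d = colB j)) : c ≠ d := by
  have p24 : j = 4 → ∃ y, G.Adj x y ∧ B G f 4 y := fun h => ⟨y, hxy, h ▸ hy⟩
  have p30 : i = 3 → ∃ x, G.Adj y x ∧ A G f 3 x := fun h => ⟨x, hxy.symm, h ▸ hx⟩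
  have p20 : j = 0 → ¬ ∃ y, G.Adj x y ∧ B G f 4 y := by
    rintro rfl ⟨z, hxz, hz⟩
    exact no_both ht hE hf hxy hy hxz hz
  have hij := edge_ab ht hx hy hxy
  generalize (∃ y, G.Adj x y ∧ B G f 4 y) = P at *
  generalize (∃ x, G.Adj y x ∧ A G f 3 x) = Q at *
  classical
  have key := col_table (decide P) (decide Q) i j hij (by simpa using p24) (by simpa using p30)
    (by simpa using p20)
  have hc' : c = if i = 2 ∧ decide P = true then 2 else colA i := by
    by_cases h : i = 2 ∧ P <;> simp [h] <;> tauto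
  have hd' : d = if j = 0 ∧ decide Q = true then 2 else colB j := by
    by_cases h : j = 0 ∧ Q <;> simp [h] <;> tauto
  rwa [hc', hd']

theorem col_proper (ht : TriFree G) (hE : EFree G) (hf : ∀ i, G.Adj (f i) (f (i + 1)))
    {x y : V} {c d : Fin 3} (hx : Col G f x c) (hy : Col G f y d) (hxy : G.Adj x y) : c ≠ d := by
  obtain ⟨i, ⟨hi, hc⟩ | ⟨hi, hc⟩⟩ := hx <;> obtain ⟨j, ⟨hj, hd⟩ | ⟨hj, hd⟩⟩ := hy
  · exact col_proper_aa ht hi hj hxy (by tauto) (by tauto)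
  · exact col_proper_ab ht hE hf hi hj hxy hc hd
  · exact (col_proper_ab ht hE hf hj hi hxy.symm hd hc).symm
  · exact col_proper_bb ht hE hf hi hj hxy (by tauto) (by tauto)

/-- A connected triangle-free graph that satisfies `EFree` and contains a 5-cycle is 3-colourable. -/
theorem colorable_of_c5 (hconn : G.Preconnected) (ht : TriFree G) (hE : EFree G)
    (hf : ∀ i, G.Adj (f i) (f (i + 1))) : G.Colorable 3 := by
  classical
  have hfn : ∀ i, Near G f (f i) := fun i => ⟨i + 1, hf i⟩
  -- Every vertex is at distance at most two from the cycle.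
  have hall : ∀ y, Near G f y ∨ ∃ x, Near G f x ∧ G.Adj x y := by
    refine closed_univ hconn _ (Or.inl (hfn 0)) ?_
    rintro x y hx hxy
    by_cases hxn : Near G f x
    · exact Or.inr ⟨x, hxn, hxy⟩
    · obtain ⟨w, hw, hwx⟩ := hx.resolve_left hxn
      exact Or.inl (far_near ht hE hf hw hxn hwx hxy)
  have far : ∀ y, ¬ Near G f y → ∃ k, ∀ z, G.Adj y z → G.Adj z (f k) := by
    intro y hy
    obtain ⟨w, hw, hwy⟩ := (hall y).resolve_left hy
    exact far_dom ht hE hf hw hy hwy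
  choose k hk using far
  choose c hc using fun x (hx : Near G f x) => col_exists (f := f) hx
  have prop : ∀ x y (hx : Near G f x) (hy : Near G f y), G.Adj x y → c x hx ≠ c y hy :=
    fun x y hx hy hxy => col_proper ht hE hf (hc x hx) (hc y hy) hxy
  -- A far vertex copies the colour of the cycle vertex that dominates it.
  refine ⟨Coloring.mk
    (fun x => if hx : Near G f x then c x hx else c (f (k x hx)) (hfn _)) ?_⟩
  intro x y hxy
  by_cases hx : Near G f x <;> by_cases hy : Near G f y
  · simpa [hx, hy] using prop _ _ hx hy hxy
  · simpa [hx, hy] using prop _ _ hx (hfn _) (hk y hy x hxy.symm)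
  · simpa [hx, hy] using prop _ _ (hfn _) hy (hk x hx y hxy).symm
  · exact absurd ⟨_, hk x hx y hxy⟩ hy

end Five

/-! ### Shortest odd cycles -/

section Long

variable {n : ℕ} {f : ZMod n → V}

/-- `f` runs once around a closed walk of odd length `n`, and no odd closed walk of `G` is shorter. -/
structure OddHole (G : SimpleGraph V) (n : ℕ) (f : ZMod n → V) : Prop where
  adj : ∀ i, G.Adj (f i) (f (i + 1))
  odd : Odd n
  min : ∀ (u : V) (w : G.Walk u u), Odd w.length → n ≤ w.length

theorem arc (hf : ∀ i, G.Adj (f i) (f (i + 1))) (i : ZMod n) (k : ℕ) :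
    ∃ w : G.Walk (f i) (f (i + k)), w.length = k := by
  induction k with
  | zero => exact ⟨Walk.nil.copy rfl (by simp), by simp⟩
  | succ k ih =>
    obtain ⟨w, hw⟩ := ih
    exact ⟨(w.concat (hf _)).copy rfl (by push_cast; ring_nf), by simp [hw]⟩

/-- A walk between two cycle vertices closes up with either of the two arcs of the cycle; whichever
yields an odd closed walk must have length at least `n`. -/
theorem OddHole.walk (h : OddHole G n f) {i j : ZMod n} (w : G.Walk (f i) (f j)) :
    ∃ d : ℕ, d < n ∧ j = i + d ∧ (Even (w.length + d) → d ≤ w.length) ∧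
      (Odd (w.length + d) → n ≤ w.length + d) := by
  have : NeZero n := ⟨by have := h.odd; rintro rfl; simp at this⟩
  have hd : j = i + ((j - i).val : ℕ) := by rw [ZMod.natCast_zmod_val]; ring
  have hlt := ZMod.val_lt (j - i)
  refine ⟨(j - i).val, hlt, hd, fun he => ?_, fun ho => ?_⟩
  · obtain ⟨v, hv⟩ := arc h.adj j (n - (j - i).val)
    have e : j + ((n - (j - i).val : ℕ) : ZMod n) = i := by
      rw [Nat.cast_sub hlt.le, ZMod.natCast_zmod_val]; simp
    have := h.min _ (w.append (v.copy rfl (by rw [e]))) (by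
      have := h.odd
      simp only [Walk.length_append, Walk.length_copy, hv]
      grind)
    simp only [Walk.length_append, Walk.length_copy, hv] at this
    omega
  · obtain ⟨v, hv⟩ := arc h.adj i (j - i).val
    have := h.min _ (w.append (v.copy rfl (by rw [← hd])).reverse) (by simpa [hv] using ho)
    simpa [hv] using this

theorem OddHole.one (h : OddHole G n f) {i j : ZMod n} (e : G.Adj (f i) (f j)) :
    j = i + 1 ∨ j = i - 1 := by
  obtain ⟨d, hd, rfl, h1, h2⟩ := h.walk (Walk.cons e Walk.nil)
  simp only [Walk.length_cons, Walk.length_nil] at h1 h2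
  have hodd := h.odd
  have : d = 1 ∨ d + 1 = n := by grind
  rcases this with rfl | rfl
  · left; simp
  · right
    have := ZMod.natCast_self (d + 1)
    push_cast at this
    linear_combination this

theorem OddHole.two (h : OddHole G n f) {i j : ZMod n} {x : V} (e : G.Adj x (f i))
    (e' : G.Adj x (f j)) : j = i ∨ j = i + 2 ∨ j = i - 2 := by
  obtain ⟨d, hd, rfl, h1, h2⟩ := h.walk (Walk.cons e.symm (Walk.cons e' Walk.nil))
  simp only [Walk.length_cons, Walk.length_nil] at h1 h2
  have hodd := h.odd
  have : d = 0 ∨ d = 2 ∨ d + 2 = n := by grind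
  rcases this with rfl | rfl | rfl
  · left; simp
  · right; left; simp
  · right; right
    have := ZMod.natCast_self (d + 2)
    push_cast at this
    linear_combination this

theorem OddHole.three (h : OddHole G n f) {i j : ZMod n} {x y : V} (e : G.Adj x (f i))
    (exy : G.Adj x y) (e' : G.Adj y (f j)) : j = i + 1 ∨ j = i - 1 ∨ j = i + 3 ∨ j = i - 3 := by
  obtain ⟨d, hd, rfl, h1, h2⟩ := h.walk (Walk.cons e.symm (Walk.cons exy (Walk.cons e' Walk.nil)))
  simp only [Walk.length_cons, Walk.length_nil] at h1 h2
  have hodd := h.odd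
  have : d = 1 ∨ d = 3 ∨ d + 1 = n ∨ d + 3 = n := by grind
  rcases this with rfl | rfl | rfl | rfl
  · left; simp
  · right; right; left; simp
  · right; left
    have := ZMod.natCast_self (d + 1)
    push_cast at this
    linear_combination this
  · right; right; right
    have := ZMod.natCast_self (d + 3)
    push_cast at this
    linear_combination this

theorem OddHole.ne_zero (h : OddHole G n f) (hn : 7 ≤ n) : (1 : ZMod n) ≠ 0 ∧ (2 : ZMod n) ≠ 0 ∧
    (3 : ZMod n) ≠ 0 ∧ (4 : ZMod n) ≠ 0 ∧ (5 : ZMod n) ≠ 0 ∧ (6 : ZMod n) ≠ 0 ∧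
    (8 : ZMod n) ≠ 0 := by
  have key : ∀ k : ℕ, 0 < k → k < n → (k : ZMod n) ≠ 0 := fun k h0 hk h' =>
    absurd (Nat.le_of_dvd h0 ((ZMod.natCast_eq_zero_iff k n).1 h')) (by omega)
  refine ⟨by simpa using key 1 (by omega) (by omega), by simpa using key 2 (by omega) (by omega),
    by simpa using key 3 (by omega) (by omega), by simpa using key 4 (by omega) (by omega),
    by simpa using key 5 (by omega) (by omega), by simpa using key 6 (by omega) (by omega), ?_⟩
  intro h8
  have h8' : ((8 : ℕ) : ZMod n) = 0 := by simpa using h8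
  rw [ZMod.natCast_eq_zero_iff] at h8'
  have hle := Nat.le_of_dvd (by omega) h8'
  have := h.odd
  have : n = 7 ∨ n = 8 := by omega
  rcases this with rfl | rfl
  · omega
  · exact absurd h.odd (by decide)

/-- `x` sees both cycle neighbours of `f i`, as `f i` itself does. -/
def Clone (G : SimpleGraph V) (f : ZMod n → V) (i : ZMod n) (x : V) : Prop :=
  G.Adj x (f (i + 1)) ∧ G.Adj x (f (i - 1))

/-- A vertex with a neighbour on a shortest odd cycle of length at least seven is a clone of a cycle
vertex: otherwise that neighbour is the centre of an induced E-graph. -/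
theorem OddHole.clone (h : OddHole G n f) (hn : 7 ≤ n) (hE : EFree G) {i : ZMod n} {y : V}
    (hy : G.Adj y (f i)) : ∃ j, Clone G f j y := by
  obtain ⟨n1, n2, n3, n4, n5, -, -⟩ := h.ne_zero hn
  by_cases h2 : G.Adj y (f (i + 2))
  · exact ⟨i + 1, by rwa [show i + 1 + 1 = i + 2 by ring], by rwa [show i + 1 - 1 = i by ring]⟩
  by_cases h3 : G.Adj y (f (i - 2))
  · exact ⟨i - 1, by rwa [show i - 1 + 1 = i by ring], by rwa [show i - 1 - 1 = i - 2 by ring]⟩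
  exfalso
  have a1 := h.adj i
  have a2 := h.adj (i + 1)
  have a3 := h.adj (i - 1)
  have a4 := h.adj (i - 2)
  rw [show i + 1 + 1 = i + 2 by ring] at a2
  rw [show i - 1 + 1 = i by ring] at a3
  rw [show i - 2 + 1 = i - 1 by ring] at a4
  rcases hE (f i) y (f (i + 1)) (f (i + 2)) (f (i - 1)) (f (i - 2)) hy.symm a1 a2 a3.symm a4.symm with
    e | e | e | e | e
  · exact h2 e
  · exact h3 e
  · rcases h.one e with e' | e'
    · exact n4 (by linear_combination -e')
    · exact n2 (by linear_combination -e')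
  · rcases h.one e with e' | e'
    · exact n2 (by linear_combination e')
    · exact n4 (by linear_combination e')
  · rcases h.one e with e' | e'
    · exact n5 (by linear_combination -e')
    · exact n3 (by linear_combination -e')

/-- Exchanging a cycle vertex for one of its clones gives another shortest odd cycle. -/
theorem OddHole.update (h : OddHole G n f) (hn : 7 ≤ n) {i : ZMod n} {x : V} (hx : Clone G f i x) :
    OddHole G n (Function.update f i x) := by
  obtain ⟨n1, -⟩ := h.ne_zero hn
  refine ⟨fun j => ?_, h.odd, h.min⟩
  have h0 := h.adj j
  by_cases hj : j = i
  · subst hj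
    rw [Function.update_self, Function.update_of_ne (by simpa using n1)]
    exact hx.1
  by_cases hj' : j + 1 = i
  · subst hj'
    rw [Function.update_self, Function.update_of_ne hj]
    simpa using hx.2.symm
  · rwa [Function.update_of_ne hj, Function.update_of_ne hj']

theorem OddHole.all_clone (h : OddHole G n f) (hn : 7 ≤ n) (hE : EFree G) (hc : G.Preconnected)
    (x : V) : ∃ i, Clone G f i x := by
  obtain ⟨n1, n2, -⟩ := h.ne_zero hn
  have h0 := h.adj (0 - 1)
  rw [show (0 - 1 + 1 : ZMod n) = 0 by ring] at h0
  refine closed_univ hc (fun x => ∃ i, Clone G f i x) (v := f 0) ⟨0, h.adj 0, h0.symm⟩ ?_ x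
  rintro x y ⟨i, hi⟩ hxy
  -- On the cycle through `x`, the vertex `y` has two neighbours, one of which is not `x`.
  obtain ⟨j, hj1, hj2⟩ := (h.update hn hi).clone hn hE (i := i) (y := y)
    (by rw [Function.update_self]; exact hxy.symm)
  by_cases hj : j + 1 = i
  · rw [Function.update_of_ne fun e => n2 (by linear_combination hj - e)] at hj2
    exact h.clone hn hE hj2
  · rw [Function.update_of_ne hj] at hj1
    exact h.clone hn hE hj1

theorem OddHole.clone_adj (h : OddHole G n f) (hn : 7 ≤ n) {i j : ZMod n} {x y : V}
    (hx : Clone G f i x) (hy : Clone G f j y) (hxy : G.Adj x y) : j = i + 1 ∨ i = j + 1 := by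
  obtain ⟨n1, n2, n3, n4, n5, n6, n8⟩ := h.ne_zero hn
  -- `j - i` is `±1` or `±3`, and so are `j - i - 2` and `j - i + 2`, which rules out `±3`.
  rcases h.three hx.1 hxy hy.1 with e | e | e | e
  · left; linear_combination e
  · right; linear_combination -e
  · rcases h.three hx.2 hxy hy.1 with e' | e' | e' | e'
    · exact (n4 (by linear_combination e' - e)).elim
    · exact (n6 (by linear_combination e' - e)).elim
    · exact (n2 (by linear_combination e' - e)).elim
    · exact (n8 (by linear_combination e' - e)).elim
  · rcases h.three hx.1 hxy hy.2 with e' | e' | e' | e'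
    · exact (n6 (by linear_combination e - e')).elim
    · exact (n4 (by linear_combination e - e')).elim
    · exact (n8 (by linear_combination e - e')).elim
    · exact (n2 (by linear_combination e - e')).elim

theorem cycle_colouring (hn : 7 ≤ n) (ho : Odd n) :
    ∃ c : ZMod n → Fin 3, ∀ i, c i ≠ c (i + 1) := by
  have : NeZero n := ⟨by omega⟩
  refine ⟨fun i => if i.val + 1 = n then 2 else if Even i.val then 0 else 1, fun i => ?_⟩
  have hv : (i + 1).val = if i.val + 1 = n then 0 else i.val + 1 := by
    have := ZMod.val_lt i
    have : Fact (1 < n) := ⟨by omega⟩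
    rw [ZMod.val_add, ZMod.val_one]
    split_ifs with h
    · simp [h]
    · exact Nat.mod_eq_of_lt (by omega)
  simp only [hv]
  grind

/-- The clone classes map `G` homomorphically onto the cycle. -/
theorem OddHole.colorable (h : OddHole G n f) (hn : 7 ≤ n) (hE : EFree G) (hc : G.Preconnected) :
    G.Colorable 3 := by
  obtain ⟨c, hcol⟩ := cycle_colouring hn h.odd
  choose k hk using h.all_clone hn hE hc
  refine ⟨Coloring.mk (fun x => c (k x)) fun {x y} hxy => ?_⟩
  rcases h.clone_adj hn (hk x) (hk y) hxy with e | e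
  · rw [e]; exact hcol _
  · rw [e]; exact (hcol _).symm

end Long

/-- A shortest odd closed walk, parametrised by `ZMod n`. -/
theorem exists_oddHole (hb : ¬ G.Colorable 2) : ∃ n f, OddHole G n f := by
  classical
  rw [two_colorable_iff_forall_loop_even] at hb
  push Not at hb
  have hex : ∃ n, Odd n ∧ ∃ (u : V) (w : G.Walk u u), w.length = n := by
    obtain ⟨u, w, hw⟩ := hb
    exact ⟨w.length, by simpa using hw, u, w, rfl⟩
  obtain ⟨ho, u, w, hw⟩ := Nat.find_spec hex
  have hmin : ∀ (v : V) (p : G.Walk v v), Odd p.length → Nat.find hex ≤ p.length :=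
    fun v p hp => Nat.find_min' hex ⟨hp, v, p, rfl⟩
  generalize Nat.find hex = n at *
  have : NeZero n := ⟨by rintro rfl; simp at ho⟩
  refine ⟨n, fun i => w.getVert i.val, fun i => ?_, ho, hmin⟩
  have hlt := ZMod.val_lt i
  have := w.adj_getVert_succ (i := i.val) (by omega)
  by_cases h : i.val + 1 = n
  · have e : i + 1 = 0 := by
      have := congrArg (Nat.cast : ℕ → ZMod n) h
      simpa using this
    have hl : w.getVert (i.val + 1) = u :=
      (congrArg w.getVert (h.trans hw.symm)).trans w.getVert_length
    rw [hl] at this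
    simpa [e] using this
  · have e : (i + 1).val = i.val + 1 := by
      have : Fact (1 < n) := ⟨by omega⟩
      rw [ZMod.val_add, ZMod.val_one]
      exact Nat.mod_eq_of_lt (by omega)
    simpa only [e] using this

/-- Connected triangle-free graphs without induced E-graph are 3-colourable. -/
theorem colorable_three (hc : G.Preconnected) (ht : TriFree G) (hE : EFree G) :
    G.Colorable 3 := by
  by_cases hb : G.Colorable 2
  · exact hb.mono (by omega)
  obtain ⟨n, f, h⟩ := exists_oddHole hb
  have ho := h.odd
  have hcases : n = 1 ∨ n = 3 ∨ n = 5 ∨ 7 ≤ n := by grind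
  -- Odd closed walks of length one and three would give a loop and a triangle.
  rcases hcases with rfl | rfl | rfl | hn
  · exact absurd (h.adj 0) (by rw [Subsingleton.elim (0 + 1 : ZMod 1) 0]; exact G.loopless.irrefl _)
  · exact absurd (h.adj 2).symm (ht _ _ _ (h.adj 0) (h.adj 1))
  · exact colorable_of_c5 (f := f) hc ht hE h.adj
  · exact h.colorable hn hE hc

end PawE

/-! ### The bound -/

open PawE in
theorem stmt_6 {V : Type*} [Fintype V] (G : SimpleGraph V)
    (hpaw : ¬ Nonempty (pawGraph ↪g G)) (hE : ¬ Nonempty (eGraph ↪g G)) :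
    G.chromaticNumber ≤ (G.cliqueNum + 1 : ℕ) := by
  apply Colorable.chromaticNumber_le
  rw [colorable_iff_forall_connectedComponent]
  intro C
  have emb : C.toSimpleGraph ↪g G := Embedding.induce _
  have hconn := C.connected_toSimpleGraph.preconnected
  have hpaw' : ¬ Nonempty (pawGraph ↪g C.toSimpleGraph) := fun ⟨φ⟩ => hpaw ⟨emb.comp φ⟩
  have hE' : ¬ Nonempty (eGraph ↪g C.toSimpleGraph) := fun ⟨φ⟩ => hE ⟨emb.comp φ⟩
  by_cases ht : TriFree C.toSimpleGraph
  · by_cases hedge : ∃ x y, C.toSimpleGraph.Adj x y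
    · -- An edge gives clique number at least two, so three colours are within budget.
      obtain ⟨x, y, hxy⟩ := hedge
      have hxy' : G.Adj (emb x) (emb y) := emb.map_rel_iff.2 hxy
      have h2 : 2 ≤ G.cliqueNum := by
        classical
        have hcl : G.IsClique (({emb x, emb y} : Finset V) : Set V) := by
          simp [hxy']
        have := hcl.card_le_cliqueNum
        rwa [Finset.card_pair hxy'.ne] at this
      exact (colorable_three hconn ht (eFree_of ht hE')).mono (by omega)
    · push Not at hedge
      exact ⟨Coloring.mk (fun _ => 0) fun {x y} hxy => absurd hxy (hedge x y)⟩
  · -- A complete multipartite graph needs no more colours than its clique number.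
    have hfree : C.toSimpleGraph.CliqueFree (G.cliqueNum + 1) := by
      have hG : G.CliqueFree (G.cliqueNum + 1) := by
        intro s hs
        have := hs.isClique.card_le_cliqueNum
        rw [hs.card_eq] at this
        omega
      exact hG.comap ⟨emb.toCopy⟩
    exact ((multipartite hconn hpaw' ht).colorable_of_cliqueFree hfree).mono (by omega)
end

section
/- Let p, q, s, t ≥ 1 be integers and let G be a graph. If G contains no (p,t)-balloon of value at least q and G contains no t-biclique of value at least s, then χ(G) ≤ (∑_{i=0}^{p−1} t^i)(s + t(2t+9)) + t^p · q. -/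
/-!
The proof lengthens a balloon one vertex at a time. Write `f p q` for the claimed bound. It
satisfies `f (p + 1) q = f p (s + t * (2 * t + 9) + t * q)`, so by induction on `p` (for all `q`
at once) it suffices that a `(p, t)`-balloon of value at least `s + t * (2 * t + 9) + t * q` yields
a `(p + 1, t)`-balloon of value at least `q`.

**Highly connected subgraphs** (`exists_kconn`). A graph with chromatic number at least `c + 3 * k`,
where `c ≥ k ≥ 1`, has a `k`-connected induced subgraph with chromatic number at least `c`. If not,
one shows by induction (`ext_of_cost`) that prescribed patterns extend: given a free set `U` and a
disjoint set `S` partitioned into at most `3 * (k - 1)` classes, there is a colouring of `U ∪ S`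
with `c + 3 * k - 1` colours in which two vertices of `S` have the same colour exactly when
they are in the same class, and which is proper on all edges with an end in `U`. The induction
hypothesis is controlled by the weight of `S`, in which a vertex counts for its number of
neighbours in `U` capped at `k`, and which is at most `2 * k * (k - 1)`.
A class sending fewer than `k` edges to `U` is removed and receives an unused colour
afterwards (`ext_of_weak`). If there is no such class, the bound on the weight leaves at most
`2 * (k - 1)` classes. Consider the graph on `U` together with the vertices of `S` that have at
least `k` neighbours in `U`. If it is `k`-connected or has at most `k` vertices, then `U` is
coloured with colours disjoint from those of `S` (`ext_of_col`). Otherwise it has a cut of fewer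
than `k` vertices; outside the cut the weight is split between the two sides. The side with
the larger weight is extended first, then the lighter one with the cut prescribed as well, and
the two colourings are glued by permuting colours (`ext_of_separation`, `ext_glue`).

**One more vertex** (`exists_longer`). Let `v` be the end of the path of a balloon `(P, Y)`. Its
non-neighbours in `Y` contain a `3 * t`-connected set `Z` of chromatic number at least
`s + t * q + 2 * t ^ 2`. The set `B` of vertices whose non-neighbours in `Z` have chromatic number
less than `q + 2 * t` has fewer than `t` elements, for otherwise `t` of them would be completely
joined to a set of chromatic number at least `s` (`bad_lt`). Hence `Y \ B` is connected, and
contains a shortest path from `v` to a vertex `u` with a neighbour in `Z \ B`. If `u` has at least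
`t` neighbours in `Z \ B`, the path to `u` and `(Z \ B) ∪ {u}` form a balloon. If not,
all but one of the neighbours of `u` in `Z \ B` are deleted, and the path is continued to the
remaining one. In both cases the path has gained at least one vertex, and the end of the
path, which is not in `B`, still has non-neighbours of chromatic number at least `q`. Dropping
initial vertices of the path gives the desired length.
-/

/-- A graph is `t`-connected if it has more than `t` vertices and deleting any set of
fewer than `t` vertices leaves it connected. -/
def IsTConnected {V : Type*} (G : SimpleGraph V) (t : ℕ) : Prop :=
  t < Nat.card V ∧ ∀ S : Set V, S.ncard < t → (G.induce (Sᶜ)).Connected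

/-- `(v, Y)` is a `(p,t)`-balloon in `G`: `v` enumerates an induced path
`v 0 - v 1 - ⋯ - v (p-1)`; the vertices `v 0, …, v (p-2)` are outside `Y` and
`v (p-1) ∈ Y`; none of `v 0, …, v (p-3)` has a neighbour in `Y`; `v (p-1)` is the
unique neighbour of `v (p-2)` in `Y` (when `p ≥ 2`); and `G[Y]` is `t`-connected. -/
def IsBalloon {V : Type*} (G : SimpleGraph V) (p t : ℕ) (v : Fin p → V) (Y : Set V) : Prop :=
  Function.Injective v ∧
  (∀ i j : Fin p, G.Adj (v i) (v j) ↔ (i.val + 1 = j.val ∨ j.val + 1 = i.val)) ∧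
  (∀ i : Fin p, i.val < p - 1 → v i ∉ Y) ∧
  (∀ i : Fin p, i.val = p - 1 → v i ∈ Y) ∧
  (∀ i : Fin p, i.val < p - 2 → ∀ y ∈ Y, ¬ G.Adj (v i) y) ∧
  (2 ≤ p → ∀ i : Fin p, i.val = p - 2 → ∀ y ∈ Y, G.Adj (v i) y →
    ∀ j : Fin p, j.val = p - 1 → y = v j) ∧
  IsTConnected (G.induce Y) t

namespace Balloon

/-! ### Colourings and connectivity of vertex sets -/

/-- `Col G S n`: the induced subgraph `G[S]` is `n`-colourable. Colours are natural numbers below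
`n`, and the colouring is a function on the whole vertex type, so that colourings of
different vertex sets can be glued without coercions. -/
def Col {V : Type*} (G : SimpleGraph V) (S : Set V) (n : ℕ) : Prop :=
  ∃ f : V → ℕ, (∀ x ∈ S, f x < n) ∧ ∀ x ∈ S, ∀ y ∈ S, G.Adj x y → f x ≠ f y

/-- `Conn G Y`: the induced subgraph `G[Y]` is connected, expressed through cuts: `Y` is nonempty
and every partition of `Y` into two nonempty parts is crossed by an edge. -/
def Conn {V : Type*} (G : SimpleGraph V) (Y : Set V) : Prop :=
  Y.Nonempty ∧ ∀ A ⊆ Y, A.Nonempty → (Y \ A).Nonempty → ∃ a ∈ A, ∃ b ∈ Y \ A, G.Adj a b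

/-- `KConn G Y t`: the induced subgraph `G[Y]` is `t`-connected; the deleted set may be any set of
fewer than `t` vertices of `G`. -/
def KConn {V : Type*} (G : SimpleGraph V) (Y : Set V) (t : ℕ) : Prop :=
  t < Y.ncard ∧ ∀ B : Set V, B.ncard < t → Conn G (Y \ B)

variable {V : Type*}

theorem col_iff (G : SimpleGraph V) (S : Set V) (n : ℕ) :
    (G.induce S).Colorable n ↔ Col G S n := by
  classical
  constructor
  · rintro ⟨C⟩
    refine ⟨fun x => if h : x ∈ S then (C ⟨x, h⟩).val else 0, ?_, ?_⟩
    · intro x hx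
      simp [hx]
    · intro x hx y hy hxy
      simp only [hx, hy, dif_pos]
      have := C.valid (v := ⟨x, hx⟩) (w := ⟨y, hy⟩) (by simpa using hxy)
      exact fun h => this (Fin.ext h)
  · rintro ⟨f, h1, h2⟩
    refine ⟨SimpleGraph.Coloring.mk (fun x => ⟨f x, h1 x x.2⟩) ?_⟩
    intro x y hxy h
    exact h2 x x.2 y y.2 (by simpa using hxy) (by simpa using h)

theorem chrom_lt_iff (G : SimpleGraph V) (S : Set V) (n : ℕ) (hn : 1 ≤ n) :
    (G.induce S).chromaticNumber < (n : ℕ) ↔ Col G S (n - 1) := by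
  rw [← col_iff, ← SimpleGraph.chromaticNumber_le_iff_colorable]
  obtain ⟨m, rfl⟩ : ∃ m, n = m + 1 := ⟨n - 1, by omega⟩
  simp only [Nat.add_sub_cancel]
  rw [Nat.cast_add, Nat.cast_one]
  exact ENat.lt_add_one_iff (ENat.natCast_ne_top m)

theorem Col.mono {G : SimpleGraph V} {S T : Set V} {n m : ℕ} (h : Col G S n) (hT : T ⊆ S)
    (hnm : n ≤ m) : Col G T m := by
  obtain ⟨f, h1, h2⟩ := h
  exact ⟨f, fun x hx => (h1 x (hT hx)).trans_le hnm, fun x hx y hy => h2 x (hT hx) y (hT hy)⟩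

theorem Col.union {G : SimpleGraph V} {S T : Set V} {n m : ℕ} (h : Col G S n) (h' : Col G T m) :
    Col G (S ∪ T) (n + m) := by
  classical
  obtain ⟨f, h1, h2⟩ := h
  obtain ⟨g, h3, h4⟩ := h'
  have h5 : ∀ x, x ∈ S ∪ T → x ∉ S → x ∈ T := fun x hx hx' => hx.resolve_left hx'
  refine ⟨fun x => if x ∈ S then f x else n + g x, ?_, ?_⟩
  · intro x hx
    by_cases hS : x ∈ S
    · have := h1 x hS
      simp only [hS, if_true]; omega
    · have := h3 x (h5 x hx hS)
      simp only [hS, if_false]; omega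
  · intro x hx y hy hxy
    by_cases hS : x ∈ S <;> by_cases hS' : y ∈ S <;> simp only [hS, hS', if_true, if_false]
    · exact h2 x hS y hS' hxy
    · have := h1 x hS; omega
    · have := h1 y hS'; omega
    · have := h4 x (h5 x hx hS) y (h5 y hy hS') hxy
      omega

theorem col_ncard [Fintype V] (G : SimpleGraph V) (S : Set V) : Col G S S.ncard := by
  classical
  rw [← col_iff]
  have := (G.induce S).colorable_of_fintype
  rwa [← Nat.card_eq_fintype_card, Nat.card_coe_set_eq] at this

/-- A union of `|X|` sets, each `n`-colourable, is `|X| * n`-colourable. -/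
theorem col_biUnion {G : SimpleGraph V} (X : Finset V) (F : V → Set V) (n : ℕ)
    (h : ∀ x ∈ X, Col G (F x) n) : Col G {y | ∃ x ∈ X, y ∈ F x} (X.card * n) := by
  classical
  induction X using Finset.induction_on with
  | empty => exact ⟨fun _ => 0, by simp, by simp⟩
  | insert a X ha ih =>
    have h1 := (h a (by simp)).union (ih fun x hx => h x (by simp [hx]))
    refine h1.mono ?_ ?_
    · rintro y ⟨x, hx, hy⟩
      rcases Finset.mem_insert.1 hx with rfl | hx
      · exact Or.inl hy
      · exact Or.inr ⟨x, hx, hy⟩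
    · rw [Finset.card_insert_of_notMem ha]
      apply le_of_eq; ring

theorem conn_iff (G : SimpleGraph V) (Y : Set V) : (G.induce Y).Connected ↔ Conn G Y := by
  constructor
  · intro h
    refine ⟨by obtain ⟨⟨x, hx⟩⟩ := h.nonempty; exact ⟨x, hx⟩, ?_⟩
    rintro A hA ⟨a, ha⟩ ⟨b, hb⟩
    obtain ⟨p⟩ := h.preconnected ⟨a, hA ha⟩ ⟨b, hb.1⟩
    obtain ⟨d, -, h1, h2⟩ := p.exists_boundary_dart {x | x.val ∈ A} ha hb.2
    exact ⟨d.fst, h1, d.snd, ⟨d.snd.2, h2⟩, by simpa using d.adj⟩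
  · rintro ⟨⟨y, hy⟩, h⟩
    have : Nonempty Y := ⟨⟨y, hy⟩⟩
    refine SimpleGraph.Connected.mk ?_
    intro u v
    by_contra hv
    obtain ⟨a, ⟨ha, ha'⟩, b, hb, hab⟩ := h {x | ∃ hx : x ∈ Y, (G.induce Y).Reachable u ⟨x, hx⟩}
      (fun x hx => hx.1) ⟨u, u.2, SimpleGraph.Reachable.refl _⟩
      ⟨v, v.2, fun hh => hv hh.2⟩
    refine hb.2 ⟨hb.1, ha'.trans (SimpleGraph.Adj.reachable ?_)⟩
    simpa using hab

theorem conn_induce (G : SimpleGraph V) (Y : Set V) (S : Set Y) :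
    Conn (G.induce Y) S ↔ Conn G (Subtype.val '' S) := by
  constructor
  · rintro ⟨h1, h2⟩
    refine ⟨h1.image _, ?_⟩
    rintro A hA ⟨a, ha⟩ ⟨b, ⟨b, hb, rfl⟩, hb'⟩
    obtain ⟨a, ha1, rfl⟩ := hA ha
    obtain ⟨c, hc, d, hd, hcd⟩ := h2 {x | x ∈ S ∧ x.val ∈ A} (fun x hx => hx.1)
      ⟨a, ha1, ha⟩ ⟨b, hb, fun hh => hb' hh.2⟩
    exact ⟨c, hc.2, d, ⟨⟨d, hd.1, rfl⟩, fun hh => hd.2 ⟨hd.1, hh⟩⟩, by simpa using hcd⟩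
  · rintro ⟨h1, h2⟩
    refine ⟨Set.image_nonempty.1 h1, ?_⟩
    rintro A hA ⟨a, ha⟩ ⟨b, hb, hb'⟩
    obtain ⟨_, ⟨c, hc, rfl⟩, _, ⟨⟨d, hd, rfl⟩, hd'⟩, hcd⟩ := h2 (Subtype.val '' A)
      (Set.image_mono hA) ⟨a, a, ha, rfl⟩
      ⟨b, ⟨b, hb, rfl⟩, by rintro ⟨x, hx, hxb⟩; exact hb' (Subtype.ext hxb ▸ hx)⟩
    exact ⟨c, hc, d, ⟨hd, fun hh => hd' ⟨d, hh, rfl⟩⟩, hcd⟩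

theorem kconn_iff [Fintype V] (G : SimpleGraph V) (Y : Set V) (t : ℕ) :
    IsTConnected (G.induce Y) t ↔ KConn G Y t := by
  unfold IsTConnected KConn
  rw [Nat.card_coe_set_eq]
  refine and_congr_right fun _ => ?_
  constructor
  · intro h B hB
    have h1 := h (Subtype.val ⁻¹' B) (lt_of_le_of_lt ?_ hB)
    · rw [conn_iff, conn_induce] at h1
      convert h1 using 1
      ext x; simp
    · rw [← Set.ncard_image_of_injective _ Subtype.val_injective]
      exact Set.ncard_le_ncard (by simp) (Set.toFinite _)
  · intro h S hS
    rw [conn_iff, conn_induce]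
    have h1 := h (Subtype.val '' S) (by rwa [Set.ncard_image_of_injective _ Subtype.val_injective])
    convert h1 using 1
    ext x; simp

theorem Conn.exists_adj {G : SimpleGraph V} {Y : Set V} (h : Conn G Y) {x y : V} (hx : x ∈ Y)
    (hy : y ∈ Y) (hxy : x ≠ y) : ∃ z ∈ Y, G.Adj x z := by
  obtain ⟨a, rfl, b, hb, hab⟩ := h.2 {x} (by simpa using hx) ⟨x, rfl⟩
    ⟨y, hy, fun h => hxy h.symm⟩
  exact ⟨b, hb.1, hab⟩

theorem KConn.diff [Fintype V] {G : SimpleGraph V} {Y B : Set V} {t k r : ℕ} (h : KConn G Y k)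
    (hB : B.ncard ≤ r) (hr : t + r ≤ k) : KConn G (Y \ B) t := by
  refine ⟨?_, ?_⟩
  · have := Set.ncard_le_ncard_sdiff_add_ncard Y B
    have := h.1
    omega
  · intro C hC
    rw [Set.sdiff_sdiff]
    refine h.2 _ ?_
    have := Set.ncard_union_le B C
    omega

/-- A vertex with at least `t` neighbours in a `t`-connected set may be added to the set. -/
theorem KConn.insert [Fintype V] {G : SimpleGraph V} {Y : Set V} {t : ℕ} (h : KConn G Y t)
    {u : V} (hu : t ≤ (Y ∩ {y | G.Adj u y}).ncard) : KConn G (insert u Y) t := by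
  refine ⟨h.1.trans_le (Set.ncard_le_ncard (Set.subset_insert _ _)), ?_⟩
  intro B hB
  have hc := h.2 B hB
  by_cases huY : u ∈ Y
  · rwa [Set.insert_eq_of_mem huY]
  by_cases huB : u ∈ B
  · rwa [Set.insert_sdiff_of_mem _ huB]
  rw [Set.insert_sdiff_of_notMem _ huB]
  obtain ⟨z, hz, hzB⟩ : ∃ z ∈ Y ∩ {y | G.Adj u y}, z ∉ B := by
    by_contra! hcon
    have := Set.ncard_le_ncard (show _ ⊆ B from hcon) (Set.toFinite _)
    omega
  refine ⟨⟨u, by simp⟩, ?_⟩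
  rintro A hA ⟨a, ha⟩ ⟨b, hb⟩
  by_cases huA : u ∈ A
  · by_cases hzA : z ∈ A
    · obtain ⟨c, hc1, d, hd, hcd⟩ := hc.2 (A ∩ (Y \ B)) Set.inter_subset_right
        ⟨z, hzA, hz.1, hzB⟩ ⟨b, by
          rcases hb.1 with rfl | h'
          · exact absurd huA hb.2
          · exact h', fun h' => hb.2 h'.1⟩
      exact ⟨c, hc1.1, d, ⟨Or.inr hd.1, fun h' => hd.2 ⟨h', hd.1⟩⟩, hcd⟩
    · exact ⟨u, huA, z, ⟨Or.inr ⟨hz.1, hzB⟩, hzA⟩, hz.2⟩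
  · have hA' : A ⊆ Y \ B := fun x hx => by
      rcases hA hx with rfl | h'
      · exact absurd hx huA
      · exact h'
    by_cases hzA : z ∈ A
    · exact ⟨z, hzA, u, ⟨Or.inl rfl, huA⟩, hz.2.symm⟩
    · obtain ⟨c, hc1, d, hd, hcd⟩ := hc.2 A hA' ⟨a, ha⟩ ⟨z, ⟨hz.1, hzB⟩, hzA⟩
      exact ⟨c, hc1, d, ⟨Or.inr hd.1, hd.2⟩, hcd⟩

/-! ### Extending prescribed colour patterns -/

theorem factor {α : Type*} (S : Finset V) (φ : V → α) (f : V → ℕ)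
    (h : ∀ x ∈ S, ∀ y ∈ S, φ x = φ y → f x = f y) : ∃ g : α → ℕ, ∀ x ∈ S, f x = g (φ x) := by
  classical
  refine ⟨fun a => if h : ∃ x ∈ S, φ x = a then f h.choose else 0, ?_⟩
  intro x hx
  have hex : ∃ y ∈ S, φ y = φ x := ⟨x, hx, rfl⟩
  simp only [hex, dif_pos]
  exact h x hx _ hex.choose_spec.1 hex.choose_spec.2.symm

theorem exists_relabel (A : Finset ℕ) :
    ∃ g : ℕ → ℕ, Set.InjOn g A ∧ ∀ a ∈ A, g a < A.card := by
  classical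
  refine ⟨fun a => if h : a ∈ A then (A.equivFin ⟨a, h⟩).val else 0, ?_, ?_⟩
  · intro a ha b hb hab
    simp only [Finset.mem_coe.1 ha, Finset.mem_coe.1 hb, dif_pos] at hab
    simpa using A.equivFin.injective (Fin.ext hab)
  · intro a ha
    simp [ha]

/-- Two colourings of `P` with colours below `K` that have the same colour classes differ by a
permutation of the `K` colours. -/
theorem exists_perm (P : Finset V) (f g : V → ℕ) (K : ℕ) (hf : ∀ x ∈ P, f x < K)
    (hg : ∀ x ∈ P, g x < K) (h : ∀ x ∈ P, ∀ y ∈ P, f x = f y ↔ g x = g y) :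
    ∃ σ : ℕ → ℕ, (∀ a < K, σ a < K) ∧ (∀ a < K, ∀ b < K, σ a = σ b → a = b) ∧
      ∀ x ∈ P, σ (f x) = g x := by
  classical
  obtain ⟨r, hr⟩ := factor P f g fun x hx y hy => (h x hx y hy).1
  rcases Nat.eq_zero_or_pos K with rfl | hK
  · exact ⟨id, by simp, by simp, fun x hx => absurd (hf x hx) (by simp)⟩
  let r' : Fin K → Fin K := fun a => ⟨r a % K, Nat.mod_lt _ hK⟩
  let s : Finset (Fin K) := Finset.univ.filter fun a => ∃ x ∈ P, f x = a.val
  have hr' : ∀ x (hx : x ∈ P), r' ⟨f x, hf x hx⟩ = ⟨g x, hg x hx⟩ := by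
    intro x hx
    apply Fin.ext
    simp only [r', ← hr x hx]
    exact Nat.mod_eq_of_lt (hg x hx)
  have hinj : Set.InjOn r' s := by
    rintro ⟨a, ha⟩ ha' ⟨b, hb⟩ hb' hab
    obtain ⟨x, hx, rfl⟩ := (Finset.mem_filter.1 (Finset.mem_coe.1 ha')).2
    obtain ⟨y, hy, rfl⟩ := (Finset.mem_filter.1 (Finset.mem_coe.1 hb')).2
    rw [hr' x hx, hr' y hy] at hab
    exact Fin.ext ((h x hx y hy).2 (congrArg Fin.val hab))
  obtain ⟨e, he⟩ := Finset.exists_equiv_extend_of_card_eq (t := (Finset.univ : Finset (Fin K)))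
    (by simp) (s := s) (f := r') (Finset.subset_univ _) hinj
  refine ⟨fun a => if ha : a < K then ((e ⟨a, ha⟩ : Fin K) : ℕ) else 0, ?_, ?_, ?_⟩
  · intro a ha
    simp [ha]
  · intro a ha b hb hab
    simp only [ha, hb, dif_pos] at hab
    simpa using e.injective (Subtype.ext (Fin.ext hab))
  · intro x hx
    have h1 := he ⟨f x, hf x hx⟩ (by simp only [s, Finset.mem_filter, Finset.mem_univ, true_and]; exact ⟨x, hx, rfl⟩)
    simp only [hf x hx, dif_pos, h1, hr' x hx]

open Classical in
/-- The number of neighbours of `v` in `U`. -/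
noncomputable def nb (G : SimpleGraph V) (v : V) (U : Finset V) : ℕ := (U.filter (G.Adj v)).card

/-- `Ext G K U S φ`: there is a colouring of `U ∪ S` with `K` colours whose colour classes on `S` are
exactly the level sets of `φ`, and which is proper on every edge with at least one end in the
free set `U` (edges inside the prescribed set `S` impose no condition). -/
def Ext (G : SimpleGraph V) (K : ℕ) (U S : Finset V) (φ : V → ℕ) : Prop :=
  ∃ f : V → ℕ, (∀ x, x ∈ U ∨ x ∈ S → f x < K) ∧ (∀ x ∈ S, ∀ y ∈ S, f x = f y ↔ φ x = φ y) ∧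
    ∀ x ∈ U, ∀ y, y ∈ U ∨ y ∈ S → G.Adj x y → f x ≠ f y

theorem nb_mono {G : SimpleGraph V} {v : V} {U U' : Finset V} (h : U ⊆ U') :
    nb G v U ≤ nb G v U' := by
  classical
  exact Finset.card_le_card (Finset.filter_subset_filter _ h)

theorem nb_eq_zero {G : SimpleGraph V} {v : V} {U : Finset V} (h : ∀ x ∈ U, ¬ G.Adj v x) :
    nb G v U = 0 := by
  classical
  unfold nb
  rw [Finset.card_eq_zero, Finset.filter_eq_empty_iff]
  exact fun x hx => h x hx

theorem nb_add_le {G : SimpleGraph V} {v : V} {U U1 U2 : Finset V} (h1 : U1 ⊆ U) (h2 : U2 ⊆ U)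
    (h : Disjoint U1 U2) : nb G v U1 + nb G v U2 ≤ nb G v U := by
  classical
  unfold nb
  rw [← Finset.card_union_of_disjoint (Finset.disjoint_filter_filter h)]
  refine Finset.card_le_card ?_
  rw [← Finset.filter_union]
  exact Finset.filter_subset_filter _ (Finset.union_subset h1 h2)

open Classical in
/-- A prescribed colour class that sends at most `m` edges to the free set can be deleted:
after colouring the rest, it receives a colour seen neither by the other prescribed classes
nor by its free neighbours. -/
theorem ext_of_weak {G : SimpleGraph V} {K m : ℕ} {U S : Finset V} {φ : V → ℕ}
    (hUS : Disjoint U S) (hK : 4 * m + 1 ≤ K) (hS : (S.image φ).card ≤ 3 * m) (a : ℕ)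
    (ha : ∑ v ∈ S.filter (fun v => φ v = a), nb G v U ≤ m)
    (h : Ext G K U (S.filter fun v => φ v ≠ a) φ) : Ext G K U S φ := by
  obtain ⟨f, h1, h2, h3⟩ := h
  let S' := S.filter fun v => φ v ≠ a
  let Q := S.filter fun v => φ v = a
  let F : Finset ℕ := S'.image f ∪ (Q.biUnion fun v => U.filter (G.Adj v)).image f
  have hF : F.card < K := by
    have e1 : (S'.image f).card ≤ 3 * m := by
      obtain ⟨g, hg⟩ := factor S' φ f fun x hx y hy => (h2 x hx y hy).2
      refine le_trans ?_ hS
      have : S'.image f ⊆ (S.image φ).image g := by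
        intro c hc
        obtain ⟨x, hx, rfl⟩ := Finset.mem_image.1 hc
        rw [hg x hx]
        exact Finset.mem_image_of_mem _ (Finset.mem_image_of_mem _ (Finset.mem_filter.1 hx).1)
      exact (Finset.card_le_card this).trans Finset.card_image_le
    have e2 : ((Q.biUnion fun v => U.filter (G.Adj v)).image f).card ≤ m :=
      Finset.card_image_le.trans (Finset.card_biUnion_le.trans ha)
    have := Finset.card_union_le (S'.image f) ((Q.biUnion fun v => U.filter (G.Adj v)).image f)
    simp only [F]
    omega
  obtain ⟨β, hβ, hβF⟩ : ∃ β ∈ Finset.range K, β ∉ F :=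
    Finset.exists_mem_notMem_of_card_lt_card (by simpa using hF)
  have hβ1 : ∀ x ∈ S', f x ≠ β := fun x hx hh => hβF
    (Finset.mem_union_left _ (Finset.mem_image.2 ⟨x, hx, hh⟩))
  have hβ2 : ∀ v ∈ Q, ∀ x ∈ U, G.Adj v x → f x ≠ β := fun v hv x hx hvx hh => hβF
    (Finset.mem_union_right _ (Finset.mem_image.2
      ⟨x, Finset.mem_biUnion.2 ⟨v, hv, Finset.mem_filter.2 ⟨hx, hvx⟩⟩, hh⟩))
  have hdisj : ∀ x ∈ U, x ∉ S := fun x hx => Finset.disjoint_left.1 hUS hx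
  have hQS : ∀ x ∈ S, x ∉ Q → x ∈ S' := fun x hx hxQ =>
    Finset.mem_filter.2 ⟨hx, fun h => hxQ (Finset.mem_filter.2 ⟨hx, h⟩)⟩
  have hUQ : ∀ x ∈ U, x ∉ Q := fun x hx h => hdisj x hx (Finset.mem_filter.1 h).1
  have hQa : ∀ x ∈ Q, φ x = a := fun x hx => (Finset.mem_filter.1 hx).2
  have hSa : ∀ x ∈ S', φ x ≠ a := fun x hx => (Finset.mem_filter.1 hx).2
  refine ⟨fun x => if x ∈ Q then β else f x, ?_, ?_, ?_⟩
  · intro x hx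
    by_cases hxQ : x ∈ Q <;> simp only [hxQ, if_true, if_false]
    · simpa using hβ
    · exact h1 x (hx.imp_right fun h => hQS x h hxQ)
  · intro x hx y hy
    by_cases hxQ : x ∈ Q <;> by_cases hyQ : y ∈ Q <;> simp only [hxQ, hyQ, if_true, if_false]
    · simp [hQa x hxQ, hQa y hyQ]
    · have e1 := hβ1 y (hQS y hy hyQ)
      have e2 := hSa y (hQS y hy hyQ)
      rw [hQa x hxQ]
      exact ⟨fun h => absurd h.symm e1, fun h => absurd h.symm e2⟩
    · have e1 := hβ1 x (hQS x hx hxQ)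
      have e2 := hSa x (hQS x hx hxQ)
      rw [hQa y hyQ]
      exact ⟨fun h => absurd h e1, fun h => absurd h e2⟩
    · exact h2 x (hQS x hx hxQ) y (hQS y hy hyQ)
  · intro x hx y hy hxy
    simp only [hUQ x hx, if_false]
    by_cases hyQ : y ∈ Q <;> simp only [hyQ, if_true, if_false]
    · exact hβ2 y hyQ x hx hxy.symm
    · exact h3 x hx y (hy.imp_right fun h => hQS y h hyQ) hxy

/-- If few prescribed classes remain, the free set is coloured with fresh colours. -/
theorem ext_of_col {G : SimpleGraph V} {K m e : ℕ} {U S : Finset V} {φ : V → ℕ}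
    (hUS : Disjoint U S) (hS : (S.image φ).card ≤ 2 * m) (hU : Col G U e)
    (hK : e + 2 * m ≤ K) : Ext G K U S φ := by
  classical
  obtain ⟨f, h1, h2⟩ := hU
  obtain ⟨g, hg1, hg2⟩ := exists_relabel (S.image φ)
  have hdisj : ∀ x ∈ S, x ∉ U := fun x hx => Finset.disjoint_right.1 hUS hx
  have hgS : ∀ x ∈ S, g (φ x) < 2 * m := fun x hx =>
    (hg2 _ (Finset.mem_image_of_mem _ hx)).trans_le hS
  refine ⟨fun x => if x ∈ U then f x else e + g (φ x), ?_, ?_, ?_⟩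
  · rintro x (hx | hx)
    · have := h1 x hx
      simp only [hx, if_true]; omega
    · have := hgS x hx
      simp only [hdisj x hx, if_false]; omega
  · intro x hx y hy
    simp only [hdisj x hx, hdisj y hy, if_false, add_right_inj]
    exact ⟨fun h => hg1 (Finset.mem_coe.2 (Finset.mem_image_of_mem _ hx))
      (Finset.mem_coe.2 (Finset.mem_image_of_mem _ hy)) h, fun h => by rw [h]⟩
  · rintro x hx y hy hxy
    by_cases hyU : y ∈ U
    · simp only [hx, hyU, if_true]
      exact h2 x hx y hyU hxy
    · have := h1 x hx
      simp only [hx, hyU, if_true, if_false]; omega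

open Classical in
/-- Gluing along a separation: a colouring `f` away from the side `B` and a colouring of the free
part of `B` that prescribes the pattern of `f` on `S` and on the cut `X` combine, after a
permutation of colours. -/
theorem ext_glue {G : SimpleGraph V} {K : ℕ} {U S : Finset V} {φ : V → ℕ} (X B : Set V)
    (hUS : Disjoint U S)
    (hcut : ∀ x ∈ U, ∀ y ∈ U, x ∈ B → y ∉ B → y ∉ X → ¬ G.Adj x y) (hXB : ∀ x ∈ X, x ∉ B)
    (hA : Ext G K (U.filter (· ∉ B)) S φ)
    (hB : ∀ f : V → ℕ, (∀ x ∈ S, ∀ y ∈ S, f x = f y ↔ φ x = φ y) →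
      Ext G K (U.filter (· ∈ B)) (S ∪ U.filter (· ∈ X)) f) :
    Ext G K U S φ := by
  obtain ⟨f, h1, h2, h3⟩ := hA
  obtain ⟨g, g1, g2, g3⟩ := hB f h2
  have hfP : ∀ x ∈ S ∪ U.filter (· ∈ X), f x < K := by
    intro x hx
    rcases Finset.mem_union.1 hx with hx | hx
    · exact h1 x (Or.inr hx)
    · have := Finset.mem_filter.1 hx
      exact h1 x (Or.inl (Finset.mem_filter.2 ⟨this.1, hXB x this.2⟩))
  obtain ⟨σ, s1, s2, s3⟩ := exists_perm (S ∪ U.filter (· ∈ X)) g f K (fun x hx => g1 x (Or.inr hx))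
    hfP g2
  have hdisj : ∀ x ∈ S, x ∉ U := fun x hx => Finset.disjoint_right.1 hUS hx
  have hUB : ∀ x, x ∈ U → x ∈ B → x ∈ U.filter (· ∈ B) := fun x h h' => Finset.mem_filter.2 ⟨h, h'⟩
  have hUB' : ∀ x, x ∈ U → x ∉ B → x ∈ U.filter (· ∉ B) := fun x h h' => Finset.mem_filter.2 ⟨h, h'⟩
  have hcross : ∀ x ∈ U, x ∈ B → ∀ y, y ∈ U ∨ y ∈ S → ¬ (y ∈ U ∧ y ∈ B) → G.Adj x y →
      σ (g x) ≠ f y := by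
    intro x hx hxB y hy hyB hxy
    have hyP : y ∈ S ∪ U.filter (· ∈ X) := by
      by_contra hcon
      simp only [Finset.mem_union, Finset.mem_filter, not_or, not_and] at hcon
      have hyU := hy.resolve_right hcon.1
      exact hcut x hx y hyU hxB (fun h => hyB ⟨hyU, h⟩) (hcon.2 hyU) hxy
    rw [← s3 y hyP]
    intro hh
    exact g3 x (hUB x hx hxB) y (Or.inr hyP) hxy
      (s2 _ (g1 x (Or.inl (hUB x hx hxB))) _ (g1 y (Or.inr hyP)) hh)
  refine ⟨fun x => if x ∈ U ∧ x ∈ B then σ (g x) else f x, ?_, ?_, ?_⟩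
  · intro x hx
    by_cases hxB : x ∈ U ∧ x ∈ B
    · simp only [hxB, and_self, if_true]
      exact s1 _ (g1 x (Or.inl (hUB x hxB.1 hxB.2)))
    · simp only [hxB, if_false]
      rcases hx with hx | hx
      · exact h1 x (Or.inl (hUB' x hx fun h => hxB ⟨hx, h⟩))
      · exact h1 x (Or.inr hx)
  · intro x hx y hy
    simp only [hdisj x hx, hdisj y hy, false_and, if_false]
    exact h2 x hx y hy
  · intro x hx y hy hxy
    by_cases hxB : x ∈ B <;> by_cases hyB : y ∈ U ∧ y ∈ B
    · simp only [hx, hxB, hyB, and_self, if_true]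
      intro hh
      exact g3 x (hUB x hx hxB) y (Or.inl (hUB y hyB.1 hyB.2)) hxy
        (s2 _ (g1 x (Or.inl (hUB x hx hxB))) _ (g1 y (Or.inl (hUB y hyB.1 hyB.2))) hh)
    · simp only [hx, hxB, hyB, and_self, if_true, if_false]
      exact hcross x hx hxB y hy hyB hxy
    · simp only [hx, hxB, hyB, and_self, and_false, if_true, if_false]
      exact (hcross y hyB.1 hyB.2 x (Or.inl hx) (fun h => hxB h.2) hxy.symm).symm
    · simp only [hxB, hyB, and_false, if_false]
      refine h3 x (hUB' x hx hxB) y ?_ hxy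
      rcases hy with hy | hy
      · exact Or.inl (hUB' y hy fun h => hyB ⟨hy, h⟩)
      · exact Or.inr hy

/-! ### Highly connected subgraphs of large chromatic number -/

/-- The total weight of the prescribed set `S` with respect to the free set `U`: a vertex counts
for its number of neighbours in `U`, but never for more than `m + 1`. Capping makes a cut
vertex cheap, while the weight of a vertex of small degree is additive over the two sides of a
separation. -/
noncomputable def cost (G : SimpleGraph V) (m : ℕ) (U S : Finset V) : ℕ :=
  ∑ v ∈ S, min (m + 1) (nb G v U)

open Classical in
/-- The inductive step at a separation of the free set into `A`, `B` and a cut `X` of at most `m`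
vertices, where `B` is the side carrying at most half of the weight. -/
theorem ext_of_separation {G : SimpleGraph V} [Fintype V] {K m N : ℕ} {Z : Set V}
    {U S : Finset V} {φ : V → ℕ}
    (ih : ∀ (U S : Finset V) (φ : V → ℕ), 2 * U.card + S.card ≤ N → Disjoint U S →
      (U : Set V) ⊆ Z → (S : Set V) ⊆ Z → cost G m U S ≤ 2 * ((m + 1) * m) →
      (S.image φ).card ≤ 3 * m → Ext G K U S φ)
    (hN : 2 * U.card + S.card ≤ N + 1) (hUS : Disjoint U S) (hUZ : (U : Set V) ⊆ Z)
    (hSZ : (S : Set V) ⊆ Z) (hcost : cost G m U S ≤ 2 * ((m + 1) * m))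
    (hcl : (S.image φ).card ≤ 2 * m) (X A B : Set V) (hX : X.ncard ≤ m)
    (hcov : ∀ x ∈ U, x ∈ A ∨ x ∈ B ∨ x ∈ X) (hAB : ∀ a ∈ A, ∀ b ∈ B, ¬ G.Adj a b)
    (hAB' : Disjoint A B) (hXA : Disjoint X A) (hXB : Disjoint X B)
    (hA : ∃ x ∈ U, x ∈ A) (hB : ∃ x ∈ U, x ∈ B)
    (hside : cost G m (U.filter (· ∈ B)) (S.filter (· ∉ X)) ≤ (m + 1) * m) :
    Ext G K U S φ := by
  have hsum : (U.filter (· ∈ B)).card + (U.filter (· ∉ B)).card = U.card :=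
    Finset.card_filter_add_card_filter_not _
  have hBpos : 0 < (U.filter (· ∈ B)).card := by
    obtain ⟨x, hx, hxB⟩ := hB
    exact Finset.card_pos.2 ⟨x, Finset.mem_filter.2 ⟨hx, hxB⟩⟩
  have hXU : (U.filter (· ∈ X)).card + 1 ≤ (U.filter (· ∉ B)).card := by
    obtain ⟨x, hx, hxA⟩ := hA
    refine Finset.card_lt_card (Finset.ssubset_iff_of_subset ?_ |>.2 ⟨x, ?_, ?_⟩)
    · intro y hy
      rw [Finset.mem_filter] at hy ⊢
      exact ⟨hy.1, Set.disjoint_left.1 hXB hy.2⟩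
    · exact Finset.mem_filter.2 ⟨hx, Set.disjoint_left.1 hAB' hxA⟩
    · exact fun h => Set.disjoint_left.1 hXA (Finset.mem_filter.1 h).2 hxA
  have hXS : (S.filter (· ∈ X)).card + (U.filter (· ∈ X)).card ≤ m := by
    rw [← Finset.card_union_of_disjoint (Finset.disjoint_filter_filter hUS.symm)]
    refine le_trans ?_ hX
    rw [← Set.ncard_coe_finset]
    refine Set.ncard_le_ncard ?_ (Set.toFinite _)
    intro x hx
    simp only [Finset.coe_union, Finset.coe_filter, Set.mem_union, Set.mem_ofPred_eq] at hx
    rcases hx with hx | hx <;> exact hx.2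
  have hdSX : Disjoint S (U.filter (· ∈ X)) := hUS.symm.mono_right (Finset.filter_subset _ _)
  refine ext_glue X B hUS ?_ (fun x hx => Set.disjoint_left.1 hXB hx) ?_ ?_
  · intro x hx y hy hxB hyB hyX hxy
    have := (hcov y hy).resolve_right fun h => h.elim hyB hyX
    exact hAB y this x hxB hxy.symm
  · refine ih _ _ _ (by omega) (hUS.mono_left (Finset.filter_subset _ _)) ?_ hSZ ?_ (by omega)
    · exact (Finset.coe_subset.2 (Finset.filter_subset _ _)).trans hUZ
    · refine le_trans ?_ hcost
      exact Finset.sum_le_sum fun v _ => min_le_min_left _ (nb_mono (Finset.filter_subset _ _))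
  · intro f hf
    refine ih _ _ _ ?_ ?_ ?_ ?_ ?_ ?_
    · rw [Finset.card_union_of_disjoint hdSX]; omega
    · rw [Finset.disjoint_union_right]
      refine ⟨hUS.mono_left (Finset.filter_subset _ _), ?_⟩
      rw [Finset.disjoint_left]
      intro x hx hx'
      exact Set.disjoint_left.1 hXB (Finset.mem_filter.1 hx').2 (Finset.mem_filter.1 hx).2
    · exact (Finset.coe_subset.2 (Finset.filter_subset _ _)).trans hUZ
    · rw [Finset.coe_union]
      exact Set.union_subset hSZ ((Finset.coe_subset.2 (Finset.filter_subset _ _)).trans hUZ)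
    · have e1 : cost G m (U.filter (· ∈ B)) (S ∪ U.filter (· ∈ X)) =
          cost G m (U.filter (· ∈ B)) (S.filter (· ∉ X)) +
          cost G m (U.filter (· ∈ B)) (S.filter (· ∈ X)) +
          cost G m (U.filter (· ∈ B)) (U.filter (· ∈ X)) := by
        unfold cost
        rw [Finset.sum_union hdSX, add_comm (∑ v ∈ S.filter (· ∉ X), _),
          Finset.sum_filter_add_sum_filter_not]
      have e2 : ∀ T : Finset V, cost G m (U.filter (· ∈ B)) T ≤ T.card * (m + 1) := by
        intro T
        unfold cost
        rw [← smul_eq_mul]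
        exact Finset.sum_le_card_nsmul _ _ _ fun v _ => min_le_left _ _
      have e3 := e2 (S.filter (· ∈ X))
      have e4 := e2 (U.filter (· ∈ X))
      have e5 := Nat.mul_le_mul_right (m + 1) hXS
      rw [e1]
      nlinarith
    · rw [Finset.image_union]
      have e1 := Finset.card_union_le (S.image f) ((U.filter (· ∈ X)).image f)
      have e2 : ((U.filter (· ∈ X)).image f).card ≤ (U.filter (· ∈ X)).card :=
        Finset.card_image_le
      have e3 : (S.image f).card ≤ 2 * m := by
        obtain ⟨g, hg⟩ := factor S φ f fun x hx y hy => (hf x hx y hy).2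
        refine le_trans ?_ hcl
        have : S.image f ⊆ (S.image φ).image g := by
          intro c hc
          obtain ⟨x, hx, rfl⟩ := Finset.mem_image.1 hc
          rw [hg x hx]
          exact Finset.mem_image_of_mem _ (Finset.mem_image_of_mem _ hx)
        exact (Finset.card_le_card this).trans Finset.card_image_le
      omega

/-- If every class carries weight more than `m`, the bound on the total weight leaves at most
`2 * m` classes. -/
theorem card_classes_le {G : SimpleGraph V} {m : ℕ} {U S : Finset V} {φ : V → ℕ}
    (hcost : cost G m U S ≤ 2 * ((m + 1) * m))
    (h : ∀ a ∈ S.image φ, ∀ T : Finset V, (∀ v, v ∈ T ↔ v ∈ S ∧ φ v = a) →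
      m < ∑ v ∈ T, nb G v U) : (S.image φ).card ≤ 2 * m := by
  classical
  have h1 : ∀ a ∈ S.image φ, m + 1 ≤ ∑ v ∈ S.filter (fun v => φ v = a), min (m + 1) (nb G v U) := by
    intro a ha
    by_cases hbig : ∃ v ∈ S.filter (fun v => φ v = a), m + 1 ≤ nb G v U
    · obtain ⟨v, hv, hvb⟩ := hbig
      calc m + 1 = min (m + 1) (nb G v U) := (min_eq_left hvb).symm
        _ ≤ _ := Finset.single_le_sum (f := fun v => min (m + 1) (nb G v U))
          (fun _ _ => Nat.zero_le _) hv
    · push Not at hbig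
      rw [Finset.sum_congr rfl fun v hv => min_eq_right (hbig v hv).le]
      exact h a ha _ fun v => Finset.mem_filter
  have h2 : (S.image φ).card * (m + 1) ≤ cost G m U S := by
    unfold cost
    rw [← Finset.sum_fiberwise_of_maps_to (g := φ) (t := S.image φ)
      (fun x hx => Finset.mem_image_of_mem _ hx), ← smul_eq_mul]
    exact Finset.card_nsmul_le_sum _ _ _ h1
  by_contra hcon
  have : (2 * m + 1) * (m + 1) ≤ (S.image φ).card * (m + 1) := Nat.mul_le_mul_right _ (by omega)
  nlinarith

/-- If no `(m+1)`-connected induced subgraph needs more than `d` colours, then every light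
prescription with few classes extends to a colouring with `K` colours. -/
theorem ext_of_cost [Fintype V] (G : SimpleGraph V) (Z : Set V) (m d K : ℕ)
    (hK1 : 4 * m + 1 ≤ K) (hK2 : d + 2 * m ≤ K)
    (hyp : ∀ Y ⊆ Z, KConn G Y (m + 1) → Col G Y d) (N : ℕ) :
    ∀ (U S : Finset V) (φ : V → ℕ), 2 * U.card + S.card ≤ N → Disjoint U S →
      (U : Set V) ⊆ Z → (S : Set V) ⊆ Z → cost G m U S ≤ 2 * ((m + 1) * m) →
      (S.image φ).card ≤ 3 * m → Ext G K U S φ := by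
  classical
  induction N with
  | zero =>
    intro U S φ hN hUS _ _ _ _
    have hU : U = ∅ := Finset.card_eq_zero.1 (by omega)
    have hS : S = ∅ := Finset.card_eq_zero.1 (by omega)
    subst hU hS
    exact ⟨fun _ => 0, by simp, by simp, by simp⟩
  | succ N ih =>
    intro U S φ hN hUS hUZ hSZ hcost hcl
    by_cases hweak : ∃ a ∈ S.image φ, ∑ v ∈ S.filter (fun v => φ v = a), nb G v U ≤ m
    · obtain ⟨a, ha, hw⟩ := hweak
      refine ext_of_weak hUS hK1 hcl a hw ?_
      have hlt : (S.filter fun v => φ v ≠ a).card < S.card := by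
        obtain ⟨x, hx, hxa⟩ := Finset.mem_image.1 ha
        refine Finset.card_lt_card (Finset.filter_ssubset.2 ⟨x, hx, by simpa using hxa⟩)
      refine ih _ _ _ (by omega) (hUS.mono_right (Finset.filter_subset _ _)) hUZ
        ((Finset.coe_subset.2 (Finset.filter_subset _ _)).trans hSZ) ?_ ?_
      · exact (Finset.sum_le_sum_of_subset (Finset.filter_subset _ _)).trans hcost
      · exact (Finset.card_le_card (Finset.image_subset_image (Finset.filter_subset _ _))).trans hcl
    push Not at hweak
    have hcl2 : (S.image φ).card ≤ 2 * m := by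
      refine card_classes_le hcost fun a ha T hT => ?_
      have : T = S.filter (fun v => φ v = a) := by ext v; simp [hT]
      rw [this]
      exact hweak a ha
    -- The strong prescribed vertices stay in the graph whose connectivity is examined.
    let T : Finset V := S.filter fun v => m + 1 ≤ nb G v U
    let H : Set V := ↑(U ∪ T)
    have hHZ : H ⊆ Z := by
      simp only [H, Finset.coe_union]
      exact Set.union_subset hUZ ((Finset.coe_subset.2 (Finset.filter_subset _ _)).trans hSZ)
    have hUH : (U : Set V) ⊆ H := by simp [H]
    by_cases hH : KConn G H (m + 1)
    · exact ext_of_col hUS hcl2 ((hyp H hHZ hH).mono hUH le_rfl) hK2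
    by_cases hHc : H.ncard ≤ m + 1
    · refine ext_of_col hUS hcl2 ((col_ncard G (U : Set V)).mono subset_rfl
        ((Set.ncard_le_ncard hUH (Set.toFinite _)).trans hHc)) (by omega)
    obtain ⟨X, hX, hXc⟩ : ∃ X : Set V, X.ncard < m + 1 ∧ ¬ Conn G (H \ X) := by
      unfold KConn at hH
      push Not at hH
      exact hH (by omega)
    have hne : (H \ X).Nonempty := by
      rw [Set.nonempty_iff_ne_empty]
      intro h
      have := Set.ncard_le_ncard_sdiff_add_ncard H X
      rw [h, Set.ncard_empty] at this
      omega
    obtain ⟨A, hAH, hA, hB, hAB⟩ : ∃ A ⊆ H \ X, A.Nonempty ∧ ((H \ X) \ A).Nonempty ∧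
        ∀ a ∈ A, ∀ b ∈ (H \ X) \ A, ¬ G.Adj a b := by
      unfold Conn at hXc
      push Not at hXc
      obtain ⟨A, h1, h2, h3, h4⟩ := hXc hne
      exact ⟨A, h1, h2, h3, h4⟩
    obtain ⟨B, hBdef⟩ : ∃ B, B = (H \ X) \ A := ⟨_, rfl⟩
    rw [← hBdef] at hB hAB
    have hcovH : ∀ x ∈ H, x ∈ A ∨ x ∈ B ∨ x ∈ X := by
      intro x hx
      by_cases h1 : x ∈ X
      · exact Or.inr (Or.inr h1)
      · by_cases h2 : x ∈ A
        · exact Or.inl h2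
        · exact Or.inr (Or.inl (by rw [hBdef]; exact ⟨⟨hx, h1⟩, h2⟩))
    have hBH : B ⊆ H \ X := by rw [hBdef]; exact Set.sdiff_subset
    have hdAB : Disjoint A B := by rw [hBdef]; exact Set.disjoint_sdiff_right
    have hXA : Disjoint X A := Set.disjoint_right.2 fun x hx => (hAH hx).2
    have hXB : Disjoint X B := Set.disjoint_right.2 fun x hx => (hBH hx).2
    -- A strong vertex has too many free neighbours for all of them to lie in the cut.
    have hfree : ∀ C D : Set V, C ⊆ H \ X → C.Nonempty → (∀ x ∈ H, x ∈ C ∨ x ∈ D ∨ x ∈ X) →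
        (∀ c ∈ C, ∀ e ∈ D, ¬ G.Adj c e) → ∃ x ∈ U, x ∈ C := by
      rintro C D hC ⟨c, hc⟩ hcov hCD
      have hcH := (hC hc).1
      simp only [H, Finset.coe_union, Set.mem_union, Finset.mem_coe] at hcH
      rcases hcH with hcU | hcT
      · exact ⟨c, hcU, hc⟩
      have hdeg := (Finset.mem_filter.1 hcT).2
      by_contra! hcon
      have : nb G c U ≤ X.ncard := by
        unfold nb
        rw [← Set.ncard_coe_finset]
        refine Set.ncard_le_ncard ?_ (Set.toFinite _)
        intro x hx
        have hx' := Finset.mem_filter.1 (Finset.mem_coe.1 hx)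
        rcases hcov x (hUH hx'.1) with h | h | h
        · exact absurd h (hcon x hx'.1)
        · exact absurd hx'.2 (hCD c hc x h)
        · exact h
      omega
    have hcov' : ∀ x ∈ H, x ∈ B ∨ x ∈ A ∨ x ∈ X := fun x hx => by
      rcases hcovH x hx with h | h | h <;> simp [h]
    have hBA : ∀ b ∈ B, ∀ a ∈ A, ¬ G.Adj b a := fun b hb a ha h => hAB a ha b hb h.symm
    have hAU := hfree A B hAH hA hcovH hAB
    have hBU := hfree B A hBH hB hcov' hBA
    have hsplit : cost G m (U.filter (· ∈ A)) (S.filter (· ∉ X)) +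
        cost G m (U.filter (· ∈ B)) (S.filter (· ∉ X)) ≤ 2 * ((m + 1) * m) := by
      refine le_trans ?_ hcost
      unfold cost
      rw [← Finset.sum_add_distrib]
      refine le_trans (Finset.sum_le_sum (g := fun v => min (m + 1) (nb G v U)) ?_)
        (Finset.sum_le_sum_of_subset (Finset.filter_subset _ _))
      intro v hv
      obtain ⟨hvS, hvX⟩ := Finset.mem_filter.1 hv
      have e1 : nb G v (U.filter (· ∈ A)) + nb G v (U.filter (· ∈ B)) ≤ nb G v U :=
        nb_add_le (Finset.filter_subset _ _) (Finset.filter_subset _ _)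
          (Finset.disjoint_left.2 fun x hx hx' => Set.disjoint_left.1 hdAB
            (Finset.mem_filter.1 hx).2 (Finset.mem_filter.1 hx').2)
      by_cases hvT : m + 1 ≤ nb G v U
      · have hvH : v ∈ H := by
          simp only [H, Finset.coe_union, Set.mem_union, Finset.mem_coe]
          exact Or.inr (Finset.mem_filter.2 ⟨hvS, hvT⟩)
        rcases hcovH v hvH with h | h | h
        · have : nb G v (U.filter (· ∈ B)) = 0 :=
            nb_eq_zero fun x hx => hAB v h x (Finset.mem_filter.1 hx).2
          omega
        · have : nb G v (U.filter (· ∈ A)) = 0 :=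
            nb_eq_zero fun x hx => hBA v h x (Finset.mem_filter.1 hx).2
          omega
        · exact absurd h hvX
      · omega
    rcases le_total (cost G m (U.filter (· ∈ A)) (S.filter (· ∉ X)))
      (cost G m (U.filter (· ∈ B)) (S.filter (· ∉ X))) with hle | hle
    · exact ext_of_separation ih hN hUS hUZ hSZ hcost hcl2 X B A (by omega)
        (fun x hx => hcov' x (hUH hx)) hBA hdAB.symm hXB hXA hBU hAU (by omega)
    · exact ext_of_separation ih hN hUS hUZ hSZ hcost hcl2 X A B (by omega)
        (fun x hx => hcovH x (hUH hx)) hAB hdAB hXA hXB hAU hBU (by omega)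

/-- If `G[Z]` has chromatic number at least `c + 3 * k`, where `c ≥ k ≥ 1`, then `Z` contains a set
inducing a `k`-connected subgraph of chromatic number at least `c`. This is `ext_of_cost` with
nothing prescribed. -/
theorem exists_kconn [Fintype V] (G : SimpleGraph V) (Z : Set V) (c k : ℕ) (hk : 1 ≤ k)
    (hck : k ≤ c) (hZ : ¬ Col G Z (c + 3 * k - 1)) :
    ∃ Y ⊆ Z, KConn G Y k ∧ ¬ Col G Y (c - 1) := by
  classical
  by_contra! hcon
  obtain ⟨m, rfl⟩ : ∃ m, k = m + 1 := ⟨k - 1, by omega⟩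
  refine hZ ?_
  obtain ⟨f, h1, -, h3⟩ := ext_of_cost G Z m (c - 1) (c + 3 * (m + 1) - 1) (by omega) (by omega)
    hcon _ Z.toFinset ∅ (fun _ => 0) le_rfl (by simp) (by simp) (by simp) (by simp [cost])
    (by simp)
  exact ⟨f, fun x hx => h1 x (by simp [hx]), fun x hx y hy hxy =>
    h3 x (by simpa using hx) y (by simp [hy]) hxy⟩

/-! ### Lengthening a balloon -/

/-- `Lead G L w Y`: `w (L-1), …, w 1, w 0` is an induced path that enters `Y` at its last vertex
`w 0`, which is the only vertex of `Y` with a neighbour among the earlier ones, and that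
neighbour is `w 1`. The path is indexed backwards from `Y`, so that dropping its first vertices
only decreases `L`; values of `w` at `L` and beyond are irrelevant. -/
def Lead (G : SimpleGraph V) (L : ℕ) (w : ℕ → V) (Y : Set V) : Prop :=
  (∀ i < L, ∀ j < L, w i = w j → i = j) ∧
  (∀ i < L, ∀ j < L, G.Adj (w i) (w j) ↔ i + 1 = j ∨ j + 1 = i) ∧
  w 0 ∈ Y ∧ (∀ j, 1 ≤ j → j < L → w j ∉ Y) ∧
  ∀ j, 1 ≤ j → j < L → ∀ y ∈ Y, G.Adj (w j) y → j = 1 ∧ y = w 0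

theorem Lead.of_le {G : SimpleGraph V} {L L' : ℕ} {w : ℕ → V} {Y : Set V} (h : Lead G L w Y)
    (hL : L' ≤ L) : Lead G L' w Y := by
  obtain ⟨h1, h2, h3, h4, h5⟩ := h
  exact ⟨fun i hi j hj => h1 i (by omega) j (by omega),
    fun i hi j hj => h2 i (by omega) j (by omega), h3, fun j hj hj' => h4 j hj (by omega),
    fun j hj hj' => h5 j hj (by omega)⟩

/-- A path leading into `Y` is prolonged by an induced path `u 0, …, u n` inside `Y` that leads into
a smaller set `Y'`. -/
theorem Lead.extend {G : SimpleGraph V} {L : ℕ} {w : ℕ → V} {Y Y' : Set V} (h : Lead G L w Y)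
    (u : ℕ → V) (n : ℕ) (hn : 1 ≤ n) (hu0 : u 0 = w 0) (huY : ∀ j ≤ n, u j ∈ Y)
    (hinj : ∀ i ≤ n, ∀ j ≤ n, u i = u j → i = j)
    (hadj : ∀ i ≤ n, ∀ j ≤ n, G.Adj (u i) (u j) ↔ i + 1 = j ∨ j + 1 = i)
    (hY' : Y' ⊆ Y) (hun : u n ∈ Y') (hout : ∀ j < n, u j ∉ Y')
    (huniq : ∀ j < n, ∀ y ∈ Y', G.Adj (u j) y → j + 1 = n ∧ y = u n) :
    Lead G (L + n) (fun j => if j ≤ n then u (n - j) else w (j - n)) Y' := by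
  obtain ⟨h1, h2, h3, h4, h5⟩ := h
  have hmix : ∀ a b, a ≤ n → ¬ b ≤ n → b < L + n →
      (G.Adj (u (n - a)) (w (b - n)) ↔ a + 1 = b ∨ b + 1 = a) := by
    intro a b ha hb hbL
    constructor
    · intro hab
      obtain ⟨e1, e2⟩ := h5 (b - n) (by omega) (by omega) _ (huY (n - a) (by omega)) hab.symm
      rw [← hu0] at e2
      have := hinj _ (by omega) _ (by omega) e2
      omega
    · intro hab
      have e1 : n - a = 0 := by omega
      have e2 : b - n = 1 := by omega
      rw [e1, e2, hu0, h2 0 (by omega) 1 (by omega)]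
      omega
  refine ⟨?_, ?_, by simpa using hun, ?_, ?_⟩
  · intro i hi j hj
    by_cases hin : i ≤ n <;> by_cases hjn : j ≤ n <;> simp only [hin, hjn, if_true, if_false]
    · intro hh
      have := hinj _ (by omega) _ (by omega) hh
      omega
    · intro hh
      exact absurd (hh ▸ huY (n - i) (by omega)) (h4 (j - n) (by omega) (by omega))
    · intro hh
      exact absurd (hh ▸ huY (n - j) (by omega)) (h4 (i - n) (by omega) (by omega))
    · intro hh
      have := h1 _ (by omega) _ (by omega) hh
      omega
  · intro i hi j hj
    by_cases hin : i ≤ n <;> by_cases hjn : j ≤ n <;> simp only [hin, hjn, if_true, if_false]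
    · rw [hadj _ (by omega) _ (by omega)]; omega
    · exact hmix i j hin hjn hj
    · rw [G.adj_comm, hmix j i hjn hin hi]; omega
    · rw [h2 _ (by omega) _ (by omega)]; omega
  · intro j hj hjL
    by_cases hjn : j ≤ n <;> simp only [hjn, if_true, if_false]
    · exact hout _ (by omega)
    · exact fun hh => h4 (j - n) (by omega) (by omega) (hY' hh)
  · intro j hj hjL y hy
    by_cases hjn : j ≤ n <;> simp only [hjn, if_true, if_false]
    · intro hh
      obtain ⟨e1, e2⟩ := huniq _ (by omega) y hy hh
      exact ⟨by omega, by simpa using e2⟩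
    · intro hh
      obtain ⟨-, e2⟩ := h5 _ (by omega) (by omega) y (hY' hy) hh
      rw [e2, ← hu0] at hy
      exact absurd hy (hout 0 (by omega))

/-- In a connected set, a shortest path from `v` to a target set `D` is induced and meets `D` only
at its end. -/
theorem exists_path {G : SimpleGraph V} {W D : Set V} (hW : Conn G W) {v : V} (hv : v ∈ W)
    (hD : D ⊆ W) (hDne : D.Nonempty) :
    ∃ (n : ℕ) (u : ℕ → V), u 0 = v ∧ u n ∈ D ∧ (∀ j ≤ n, u j ∈ W) ∧ (∀ j < n, u j ∉ D) ∧
      (∀ i ≤ n, ∀ j ≤ n, u i = u j → i = j) ∧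
      ∀ i ≤ n, ∀ j ≤ n, G.Adj (u i) (u j) ↔ i + 1 = j ∨ j + 1 = i := by
  classical
  have hc := (conn_iff G W).2 hW
  let H := G.induce W
  let v' : W := ⟨v, hv⟩
  have hex : ∃ n, ∃ d : W, d.val ∈ D ∧ H.dist v' d = n := by
    obtain ⟨d, hd⟩ := hDne
    exact ⟨_, ⟨d, hD hd⟩, hd, rfl⟩
  obtain ⟨d, hd, hdn⟩ := Nat.find_spec hex
  have hmin : ∀ e : W, e.val ∈ D → H.dist v' d ≤ H.dist v' e := by
    intro e he
    rw [hdn]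
    exact Nat.find_min' hex ⟨e, he, rfl⟩
  obtain ⟨p, hp⟩ := hc.exists_walk_length_eq_dist v' d
  have hdist : ∀ j ≤ p.length, H.dist v' (p.getVert j) = j := by
    intro j hj
    have e1 := SimpleGraph.dist_le (p.take j)
    have e2 := SimpleGraph.dist_le (p.drop j)
    have e3 := hc.dist_triangle (u := v') (v := p.getVert j) (w := d)
    simp only [SimpleGraph.Walk.take_length, SimpleGraph.Walk.drop_length] at e1 e2
    have hp' : p.length = H.dist v' d := hp
    change H.dist _ _ ≤ _ at e1
    change H.dist _ _ ≤ _ at e2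
    change H.dist _ _ ≤ H.dist _ _ + H.dist _ _ at e3
    omega
  have hstep : ∀ i ≤ p.length, ∀ j ≤ p.length, H.Adj (p.getVert i) (p.getVert j) → j ≤ i + 1 := by
    intro i hi j hj hij
    have e3 := hc.dist_triangle (u := v') (v := p.getVert i) (w := p.getVert j)
    change H.dist _ _ ≤ H.dist _ _ + H.dist _ _ at e3
    rw [hdist i hi, hdist j hj, SimpleGraph.dist_eq_one_iff_adj.2 hij] at e3
    exact e3
  have hinj : ∀ i ≤ p.length, ∀ j ≤ p.length, p.getVert i = p.getVert j → i = j := by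
    intro i hi j hj hij
    rw [← hdist i hi, ← hdist j hj, hij]
  refine ⟨p.length, fun j => (p.getVert j).val, by simp [v'], by simpa using hd,
    fun j _ => (p.getVert j).2, ?_, ?_, ?_⟩
  · intro j hj hjD
    have e1 := hmin _ hjD
    rw [hdist j hj.le] at e1
    have hp' : p.length = H.dist v' d := hp
    omega
  · intro i hi j hj hij
    exact hinj i hi j hj (Subtype.ext hij)
  · intro i hi j hj
    have hH : G.Adj (p.getVert i).val (p.getVert j).val ↔ H.Adj (p.getVert i) (p.getVert j) := by
      simp [H]
    rw [hH]
    constructor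
    · intro hij
      have e1 := hstep i hi j hj hij
      have e2 := hstep j hj i hi hij.symm
      have e3 : i ≠ j := by rintro rfl; exact hij.ne rfl
      omega
    · rintro (rfl | rfl)
      · exact p.adj_getVert_succ (by omega)
      · exact (p.adj_getVert_succ (by omega)).symm

/-- Without a `t`-biclique of value at least `s`, fewer than `t` vertices can have a complement of
their neighbourhood in `Y` that is `r`-colourable, once `Y` has large chromatic number: `t` of
them would have common neighbours of chromatic number at least `s`. -/
theorem bad_lt [Fintype V] {G : SimpleGraph V} {s t r : ℕ}
    (hbic : ∀ X Y : Set V, Disjoint X Y → X.ncard = t → (∀ x ∈ X, ∀ y ∈ Y, G.Adj x y) →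
      Col G Y (s - 1)) {Y : Set V} (hY : ¬ Col G Y (s - 1 + t * r)) :
    {b | Col G {y ∈ Y | ¬ G.Adj b y} r}.ncard < t := by
  classical
  by_contra! hcon
  obtain ⟨X, hX, hXt⟩ := Set.exists_subset_card_eq hcon
  have h1 := hbic X {y ∈ Y | ∀ x ∈ X, G.Adj x y}
    (Set.disjoint_left.2 fun x hx hx' => (hx'.2 x hx).ne rfl) hXt (fun x hx y hy => hy.2 x hx)
  have h2 := col_biUnion (G := G) X.toFinset (fun x => {y ∈ Y | ¬ G.Adj x y}) r
    (fun x hx => hX (by simpa using hx))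
  refine hY ((h1.union h2).mono ?_ ?_)
  · intro y hy
    by_cases h : ∀ x ∈ X, G.Adj x y
    · exact Or.inl ⟨hy, h⟩
    · push Not at h
      obtain ⟨x, hx, hxy⟩ := h
      exact Or.inr ⟨x, by simpa using hx, hy, hxy⟩
  · rw [← Set.ncard_eq_toFinset_card', hXt]

theorem not_col_of_diff [Fintype V] {G : SimpleGraph V} {Y Y' B : Set V} {n r : ℕ}
    (h : ¬ Col G Y (n + r)) (hB : B.ncard ≤ r) (hY : Y ⊆ Y' ∪ B) : ¬ Col G Y' n :=
  fun h' => h ((h'.union (col_ncard G B)).mono hY (by omega))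

/-- A balloon whose value is large enough can be replaced by a balloon with a path one vertex
longer. -/
theorem exists_longer [Fintype V] {G : SimpleGraph V} {q s t L : ℕ} (hq : 1 ≤ q) (hs : 1 ≤ s)
    (ht : 1 ≤ t)
    (hbic : ∀ X Y : Set V, Disjoint X Y → X.ncard = t → (∀ x ∈ X, ∀ y ∈ Y, G.Adj x y) →
      Col G Y (s - 1)) {w : ℕ → V} {Y : Set V} (hw : Lead G L w Y) (hY : KConn G Y t)
    (hval : ¬ Col G {y ∈ Y | ¬ G.Adj (w 0) y} (s + t * (2 * t + 9) + t * q - 1)) :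
    ∃ w' Y', Lead G (L + 1) w' Y' ∧ KConn G Y' t ∧
      ¬ Col G {y ∈ Y' | ¬ G.Adj (w' 0) y} (q - 1) := by
  have htq : t ≤ t * q := Nat.le_mul_of_pos_right t hq
  have htq' : q ≤ t * q := Nat.le_mul_of_pos_left q ht
  have htt : t ≤ t * t := Nat.le_mul_of_pos_left t ht
  obtain ⟨Z, hZ, hZc, hZv⟩ := exists_kconn G {y ∈ Y | ¬ G.Adj (w 0) y}
    (s + t * q + 2 * (t * t)) (3 * t) (by omega) (by nlinarith) (by
      convert hval using 2
      have : s + t * q + 2 * (t * t) + 3 * (3 * t) = s + t * (2 * t + 9) + t * q := by ring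
      omega)
  have hZY : Z ⊆ Y := fun z hz => (hZ hz).1
  have hZw : ∀ z ∈ Z, ¬ G.Adj (w 0) z := fun z hz => (hZ hz).2
  obtain ⟨B, hBdef⟩ : ∃ B, B = {b | Col G {y ∈ Z | ¬ G.Adj b y} (q - 1 + 2 * t)} := ⟨_, rfl⟩
  have hB : B.ncard < t := by
    rw [hBdef]
    refine bad_lt hbic fun h => hZv (h.mono subset_rfl ?_)
    obtain ⟨q, rfl⟩ : ∃ r, q = r + 1 := ⟨q - 1, by omega⟩
    have : t * (q + 1 - 1 + 2 * t) + t = t * (q + 1) + 2 * (t * t) := by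
      simp only [Nat.add_sub_cancel]; ring
    omega
  have hgood : ∀ b, b ∉ B → ¬ Col G {y ∈ Z | ¬ G.Adj b y} (q - 1 + 2 * t) := by
    intro b hb h
    exact hb (by rw [hBdef]; exact h)
  have hwB : w 0 ∉ B := by
    rw [hBdef]
    intro h
    exact hZv (Col.mono h (fun z hz => ⟨hz, hZw z hz⟩) (by omega))
  have hZ1 : KConn G (Z \ B) (2 * t) := hZc.diff (r := t) hB.le (by omega)
  have hZ1' : Conn G (Z \ B) := by
    have := hZ1.2 ∅ (by simp; omega)
    simpa using this
  have hnb : ∀ x ∈ Z \ B, ∃ y ∈ Z \ B, G.Adj x y := by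
    intro x hx
    obtain ⟨y, hy, hyx⟩ := Set.exists_ne_of_one_lt_ncard
      (show 1 < (Z \ B).ncard by have := hZ1.1; omega) x
    exact hZ1'.exists_adj hx hy hyx.symm
  have hwZ : w 0 ∉ Z \ B := fun h => by
    obtain ⟨y, hy, hxy⟩ := hnb _ h
    exact hZw y hy.1 hxy
  -- The vertices outside the bad set that see the remaining part of `Z` are the target of a shortest path.
  obtain ⟨D, hDdef⟩ : ∃ D, D = {x ∈ Y \ B | ∃ y ∈ Z \ B, G.Adj x y} := ⟨_, rfl⟩
  have hDne : D.Nonempty := by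
    obtain ⟨x, hx⟩ := hZ1'.1
    rw [hDdef]
    exact ⟨x, ⟨hZY hx.1, hx.2⟩, hnb x hx⟩
  have hwD : w 0 ∉ D := by
    rw [hDdef]
    rintro ⟨-, y, hy, hxy⟩
    exact hZw y hy.1 hxy
  obtain ⟨n, u, hu0, hun, huW, huD, huinj, huadj⟩ := exists_path (hY.2 B hB)
    (v := w 0) (D := D) ⟨hw.2.2.1, hwB⟩ (by rw [hDdef]; exact fun x hx => hx.1) hDne
  have hn : 1 ≤ n := by
    rcases Nat.eq_zero_or_pos n with rfl | hn
    · rw [hu0] at hun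
      exact absurd hun hwD
    · exact hn
  have huno : ∀ j < n, ∀ y ∈ Z \ B, ¬ G.Adj (u j) y := by
    intro j hj y hy hxy
    refine huD j hj ?_
    rw [hDdef]
    exact ⟨huW j hj.le, y, hy, hxy⟩
  have huZ : ∀ j ≤ n, u j ∉ Z \ B := by
    intro j hj hjZ
    rcases Nat.eq_zero_or_pos j with rfl | hj0
    · rw [hu0] at hjZ
      exact hwZ hjZ
    · exact huno (j - 1) (by omega) _ hjZ
        ((huadj (j - 1) (by omega) j hj).2 (Or.inl (by omega)))
  have hunB : u n ∉ B := (huW n le_rfl).2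
  by_cases hdeg : t ≤ ((Z \ B) ∩ {y | G.Adj (u n) y}).ncard
  · -- The end of the path has many neighbours, and joins the connected part.
    refine ⟨_, _, (hw.extend u n hn hu0 (fun j hj => (huW j hj).1) huinj huadj
      (Y' := insert (u n) (Z \ B)) ?_ (Set.mem_insert _ _) ?_ ?_).of_le (by omega),
      KConn.insert ?_ hdeg, ?_⟩
    · exact Set.insert_subset (huW n le_rfl).1 fun z hz => hZY hz.1
    · rintro j hj (h | h)
      · exact absurd (huinj j hj.le n le_rfl h) (by omega)
      · exact huZ j hj.le h
    · rintro j hj y (rfl | hy) hxy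
      · have := (huadj j hj.le n le_rfl).1 hxy
        exact ⟨by omega, rfl⟩
      · exact absurd hxy (huno j hj y hy)
    · have := hZ1.diff (B := ∅) (r := 0) (t := t) (by simp) (by omega)
      simpa using this
    · simp only [Nat.zero_le, if_true, Nat.sub_zero]
      refine not_col_of_diff (hgood _ hunB) (B := B) (by omega) ?_
      rintro y ⟨hy, hxy⟩
      by_cases hyB : y ∈ B
      · exact Or.inr hyB
      · exact Or.inl ⟨Or.inr ⟨hy, hyB⟩, hxy⟩
  · -- The end of the path has few neighbours: all but one of them are discarded.
    obtain ⟨x, hx, hxu⟩ : ∃ x ∈ Z \ B, G.Adj (u n) x := by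
      have := hun
      rw [hDdef] at this
      exact this.2
    obtain ⟨N, hNdef⟩ : ∃ N, N = ((Z \ B) ∩ {y | G.Adj (u n) y}) \ {x} := ⟨_, rfl⟩
    have hN : N.ncard ≤ t := by
      rw [hNdef]
      have := Set.ncard_le_ncard (s := ((Z \ B) ∩ {y | G.Adj (u n) y}) \ {x}) Set.sdiff_subset
        (Set.toFinite _)
      omega
    have hxN : x ∉ N := by rw [hNdef]; simp
    have huZ' : ∀ j ≤ n, u j ≠ x := fun j hj h => huZ j hj (h ▸ hx)
    refine ⟨_, _, (hw.extend (fun j => if j ≤ n then u j else x) (n + 1) (by omega) (by simpa using hu0)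
      ?_ ?_ ?_ (Y' := (Z \ B) \ N) ?_ ?_ ?_ ?_).of_le (by omega), hZ1.diff hN (by omega), ?_⟩
    · intro j hj
      by_cases h : j ≤ n <;> simp only [h, if_true, if_false]
      · exact (huW j h).1
      · exact hZY hx.1
    · intro i hi j hj
      by_cases h : i ≤ n <;> by_cases h' : j ≤ n <;> simp only [h, h', if_true, if_false]
      · exact huinj i h j h'
      · exact fun hh => absurd hh (huZ' i h)
      · exact fun hh => absurd hh.symm (huZ' j h')
      · intro _; omega
    · have key : ∀ i ≤ n, G.Adj (u i) x ↔ i = n := by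
        intro i hi
        constructor
        · intro h
          by_contra hne
          exact huno i (by omega) x hx h
        · rintro rfl
          exact hxu
      intro i hi j hj
      by_cases h : i ≤ n <;> by_cases h' : j ≤ n <;> simp only [h, h', if_true, if_false]
      · exact huadj i h j h'
      · rw [key i h]; omega
      · rw [G.adj_comm, key j h']; omega
      · simp; omega
    · exact fun z hz => hZY hz.1.1
    · simp only [show ¬ n + 1 ≤ n by omega, if_false]
      exact ⟨hx, hxN⟩
    · intro j hj
      simp only [show j ≤ n by omega, if_true]
      exact fun h => huZ j (by omega) h.1
    · intro j hj y hy hxy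
      simp only [show j ≤ n by omega, if_true] at hxy
      simp only [show ¬ n + 1 ≤ n by omega, if_false]
      have hjn : j = n := by
        by_contra hne
        exact huno j (by omega) y hy.1 hxy
      subst hjn
      refine ⟨rfl, ?_⟩
      by_contra hne
      exact hy.2 (by rw [hNdef]; exact ⟨⟨hy.1, hxy⟩, hne⟩)
    · simp only [Nat.zero_le, if_true, Nat.sub_zero, show ¬ n + 1 ≤ n by omega, if_false]
      refine not_col_of_diff (hgood _ hx.2) (B := B ∪ N)
        ((Set.ncard_union_le _ _).trans (by omega)) ?_
      rintro y ⟨hy, hxy⟩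
      by_cases hyB : y ∈ B
      · exact Or.inr (Or.inl hyB)
      by_cases hyN : y ∈ N
      · exact Or.inr (Or.inr hyN)
      · exact Or.inl ⟨⟨⟨hy, hyB⟩, hyN⟩, hxy⟩

/-- Balloons whose path is a single vertex: any vertex of a highly connected set of large chromatic
number that is not one of the few vertices of `bad_lt` will do. -/
theorem exists_first [Fintype V] {G : SimpleGraph V} {q s t : ℕ} (hq : 1 ≤ q) (hs : 1 ≤ s)
    (ht : 1 ≤ t)
    (hbic : ∀ X Y : Set V, Disjoint X Y → X.ncard = t → (∀ x ∈ X, ∀ y ∈ Y, G.Adj x y) →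
      Col G Y (s - 1))
    (hval : ¬ Col G Set.univ (s + t * (2 * t + 9) + t * q - 1)) :
    ∃ w Y, Lead G 1 w Y ∧ KConn G Y t ∧ ¬ Col G {y ∈ Y | ¬ G.Adj (w 0) y} (q - 1) := by
  have htq : t ≤ t * q := Nat.le_mul_of_pos_right t hq
  obtain ⟨Z, -, hZc, hZv⟩ := exists_kconn G Set.univ
    (s + t * q + 2 * (t * t)) (3 * t) (by omega) (by nlinarith) (by
      convert hval using 2
      have : s + t * q + 2 * (t * t) + 3 * (3 * t) = s + t * (2 * t + 9) + t * q := by ring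
      omega)
  have hB : {b | Col G {y ∈ Z | ¬ G.Adj b y} (q - 1)}.ncard < t := by
    refine bad_lt hbic fun h => hZv (h.mono subset_rfl ?_)
    obtain ⟨q, rfl⟩ : ∃ r, q = r + 1 := ⟨q - 1, by omega⟩
    have : t * (q + 1 - 1) + t = t * (q + 1) := by
      simp only [Nat.add_sub_cancel]; ring
    omega
  obtain ⟨v, hv, hvB⟩ : ∃ v ∈ Z, v ∉ {b | Col G {y ∈ Z | ¬ G.Adj b y} (q - 1)} := by
    by_contra! hcon
    have := Set.ncard_le_ncard (show Z ⊆ _ from hcon) (Set.toFinite _)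
    have := hZc.1
    omega
  refine ⟨fun _ => v, Z, ⟨?_, ?_, hv, ?_, ?_⟩, ?_, hvB⟩
  · intro i hi j hj _; omega
  · intro i hi j hj; simp; omega
  · intro j hj hj'; omega
  · intro j hj hj'; omega
  · have := hZc.diff (B := ∅) (r := 0) (t := t) (by simp) (by omega)
    simpa using this

/-- Iterating `exists_longer`: the bound for `p + 1` and `q` equals the bound for `p` and
`s + t * (2 * t + 9) + t * q`. -/
theorem exists_balloon [Fintype V] {G : SimpleGraph V} {s t : ℕ} (hs : 1 ≤ s)
    (ht : 1 ≤ t)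
    (hbic : ∀ X Y : Set V, Disjoint X Y → X.ncard = t → (∀ x ∈ X, ∀ y ∈ Y, G.Adj x y) →
      Col G Y (s - 1)) (p : ℕ) : ∀ q, 1 ≤ q →
    ¬ Col G Set.univ ((∑ i ∈ Finset.range (p + 1), t ^ i) * (s + t * (2 * t + 9)) +
      t ^ (p + 1) * q - 1) →
    ∃ w Y, Lead G (p + 1) w Y ∧ KConn G Y t ∧ ¬ Col G {y ∈ Y | ¬ G.Adj (w 0) y} (q - 1) := by
  induction p with
  | zero =>
    intro q hq h
    exact exists_first hq hs ht hbic (by simpa using h)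
  | succ p ih =>
    intro q hq h
    obtain ⟨w, Y, h1, h2, h3⟩ := ih (s + t * (2 * t + 9) + t * q) (by omega) (by
      convert h using 2
      rw [Finset.sum_range_succ _ (p + 1)]
      congr 1
      ring)
    exact exists_longer hq hs ht hbic h1 h2 h3

theorem isBalloon_of_lead [Fintype V] {G : SimpleGraph V} {p t : ℕ} {w : ℕ → V} {Y : Set V}
    (h : Lead G p w Y) (hY : KConn G Y t) :
    IsBalloon G p t (fun i => w (p - 1 - i.val)) Y := by
  obtain ⟨h1, h2, h3, h4, h5⟩ := h
  refine ⟨?_, ?_, ?_, ?_, ?_, ?_, (kconn_iff G Y t).2 hY⟩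
  · intro i j hij
    have := h1 _ (by omega) _ (by omega) hij
    exact Fin.ext (by omega)
  · intro i j
    rw [h2 _ (by omega) _ (by omega)]
    omega
  · intro i hi
    exact h4 _ (by omega) (by omega)
  · intro i hi
    simpa [hi] using h3
  · intro i hi y hy hxy
    have := (h5 _ (by omega) (by omega) y hy hxy).1
    omega
  · intro hp i hi y hy hxy j hj
    have := (h5 _ (by omega) (by omega) y hy hxy).2
    simpa [hj] using this

end Balloon

theorem stmt_9 {V : Type*} [Fintype V] (G : SimpleGraph V) (p q s t : ℕ)
    (hp : 1 ≤ p) (hq : 1 ≤ q) (hs : 1 ≤ s) (ht : 1 ≤ t)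
    (hballoon : ∀ (v : Fin p → V) (Y : Set V), IsBalloon G p t v Y →
      ∀ i : Fin p, i.val = p - 1 →
        (G.induce {y ∈ Y | ¬ G.Adj (v i) y}).chromaticNumber < (q : ℕ))
    (hbiclique : ∀ X Y : Set V, Disjoint X Y → X.ncard = t →
      (∀ x ∈ X, ∀ y ∈ Y, G.Adj x y) → (G.induce Y).chromaticNumber < (s : ℕ)) :
    G.chromaticNumber ≤
      ((∑ i ∈ Finset.range p, t ^ i) * (s + t * (2 * t + 9)) + t ^ p * q : ℕ) := by
  rw [SimpleGraph.chromaticNumber_le_iff_colorable]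
  by_contra hcon
  have hbic : ∀ X Y : Set V, Disjoint X Y → X.ncard = t → (∀ x ∈ X, ∀ y ∈ Y, G.Adj x y) →
      Balloon.Col G Y (s - 1) := fun X Y h1 h2 h3 =>
    (Balloon.chrom_lt_iff G Y s hs).1 (hbiclique X Y h1 h2 h3)
  obtain ⟨p, rfl⟩ : ∃ r, p = r + 1 := ⟨p - 1, by omega⟩
  obtain ⟨w, Y, h1, h2, h3⟩ := Balloon.exists_balloon hs ht hbic p q hq (by
    rintro ⟨f, hf1, hf2⟩
    refine hcon ⟨SimpleGraph.Coloring.mk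
      (fun x => ⟨f x, (hf1 x (Set.mem_univ x)).trans_le (Nat.sub_le _ _)⟩) ?_⟩
    intro x y hxy h
    exact hf2 x (Set.mem_univ x) y (Set.mem_univ y) hxy (congrArg Fin.val h))
  have := (Balloon.chrom_lt_iff G _ q hq).1 (hballoon _ Y (Balloon.isBalloon_of_lead h1 h2)
    ⟨p, by omega⟩ (by simp))
  exact h3 (by simpa using this)
end
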